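/- A BIBS system is IOS if and only if it admits an IOS-Lyapunov function. -/

import Mathlib

open MeasureTheory Set Filter Topology
open scoped ENNReal NNReal

noncomputable section

/-- A function of class `K`: continuous, strictly increasing on `[0,∞)` and vanishing at `0`. -/
def IsClassK (α : ℝ → ℝ) : Prop :=
  ContinuousOn α (Ici 0) ∧ StrictMonoOn α (Ici 0) ∧ α 0 = 0

/-- A function of class `K∞`: class `K` and unbounded. -/
def IsClassKInfty (α : ℝ → ℝ) : Prop :=
  IsClassK α ∧ Tendsto α atTop atTop

/-- A function of class `KL`. -/
def IsClassKL (β : ℝ → ℝ → ℝ) : Prop :=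
  (∀ t ∈ Ici (0:ℝ), IsClassK fun s => β s t) ∧
  ∀ s ∈ Ici (0:ℝ), AntitoneOn (fun t => β s t) (Ici 0) ∧
    Tendsto (fun t => β s t) atTop (𝓝 0)

/-- Admissible inputs: measurable and locally essentially bounded on `[0,∞)`. -/
def IsInput {m : ℕ} (u : ℝ → EuclideanSpace ℝ (Fin m)) : Prop :=
  Measurable u ∧ ∀ T > (0:ℝ), ∃ C : ℝ, ∀ᵐ t ∂(volume.restrict (Icc 0 T)), ‖u t‖ ≤ C

/-- The essential supremum norm of an input over `[0,∞)`, as an extended nonnegative real. -/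
def uNormE {m : ℕ} (u : ℝ → EuclideanSpace ℝ (Fin m)) : ℝ≥0∞ :=
  essSup (fun t => (‖u t‖₊ : ℝ≥0∞)) (volume.restrict (Ici 0))

/-- An input which is (globally) essentially bounded on `[0,∞)`. -/
def BddInput {m : ℕ} (u : ℝ → EuclideanSpace ℝ (Fin m)) : Prop := uNormE u ≠ ⊤

/-- The essential supremum norm `‖u‖` of an input, as a real number. -/
def uNorm {m : ℕ} (u : ℝ → EuclideanSpace ℝ (Fin m)) : ℝ := (uNormE u).toReal

/-- `x` is the solution map of the forward-complete system `ẋ = f(x,u)`: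
for every initial state `ξ` and admissible input `u`, `t ↦ x t ξ u` solves the corresponding
integral equation on all of `[0,∞)`. -/
def IsSolutionMap {n m : ℕ}
    (f : EuclideanSpace ℝ (Fin n) → EuclideanSpace ℝ (Fin m) → EuclideanSpace ℝ (Fin n))
    (x : ℝ → EuclideanSpace ℝ (Fin n) → (ℝ → EuclideanSpace ℝ (Fin m)) →
      EuclideanSpace ℝ (Fin n)) : Prop :=
  ∀ ξ u, IsInput u → ∀ t ∈ Ici (0:ℝ),
    x t ξ u = ξ + ∫ s in (0:ℝ)..t, f (x s ξ u) (u s)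

/-- The system is bounded-input bounded-state (BIBS): it is forward complete (encoded by the
solution-map property) and trajectories are bounded in terms of a class-`K` function of the
initial state and of the input norm. -/
def IsBIBS {n m : ℕ}
    (f : EuclideanSpace ℝ (Fin n) → EuclideanSpace ℝ (Fin m) → EuclideanSpace ℝ (Fin n))
    (x : ℝ → EuclideanSpace ℝ (Fin n) → (ℝ → EuclideanSpace ℝ (Fin m)) →
      EuclideanSpace ℝ (Fin n)) : Prop :=
  IsSolutionMap f x ∧ ∃ σ : ℝ → ℝ, IsClassK σ ∧ ∀ ξ u, IsInput u → BddInput u →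
    ∀ t ∈ Ici (0:ℝ), ‖x t ξ u‖ ≤ max (σ ‖ξ‖) (σ (uNorm u))

/-- Input-to-output stability (IOS). -/
def IsIOS {n m p : ℕ}
    (h : EuclideanSpace ℝ (Fin n) → EuclideanSpace ℝ (Fin p))
    (x : ℝ → EuclideanSpace ℝ (Fin n) → (ℝ → EuclideanSpace ℝ (Fin m)) →
      EuclideanSpace ℝ (Fin n)) : Prop :=
  ∃ β γ, IsClassKL β ∧ IsClassK γ ∧ ∀ ξ u, IsInput u → BddInput u →
    ∀ t ∈ Ici (0:ℝ), ‖h (x t ξ u)‖ ≤ max (β ‖ξ‖ t) (γ (uNorm u))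

/-- An IOS-Lyapunov function for the system `ẋ = f(x,u)`, `y = h(x)`. -/
def IsIOSLyapunov {n m p : ℕ}
    (f : EuclideanSpace ℝ (Fin n) → EuclideanSpace ℝ (Fin m) → EuclideanSpace ℝ (Fin n))
    (h : EuclideanSpace ℝ (Fin n) → EuclideanSpace ℝ (Fin p))
    (V : EuclideanSpace ℝ (Fin n) → ℝ) : Prop :=
  ContDiff ℝ (⊤:ℕ∞) V ∧ (∀ ξ, 0 ≤ V ξ) ∧
  (∃ α₁ α₂ : ℝ → ℝ, IsClassKInfty α₁ ∧ IsClassKInfty α₂ ∧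
    ∀ ξ, α₁ ‖h ξ‖ ≤ V ξ ∧ V ξ ≤ α₂ ‖ξ‖) ∧
  ∃ χ : ℝ → ℝ, IsClassK χ ∧ ∃ α₃ : ℝ → ℝ → ℝ,
    (∀ r ∈ Ici (0:ℝ), IsClassK fun s => α₃ s r) ∧
    (∀ s ∈ Ici (0:ℝ), AntitoneOn (fun r => α₃ s r) (Ici 0)) ∧
    ∀ ξ μ, χ ‖μ‖ ≤ V ξ → fderiv ℝ V ξ (f ξ μ) ≤ -α₃ (V ξ) ‖ξ‖

/-!
For the converse theorem, let `g` be a gain dominating the identity and put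
`V ξ = sup max(0, min(|y(t, ξ, u)| - a, a)) (1 + t / (1 + t))`, the supremum being over all times
`t ≥ 0`, bounded inputs `u` and levels `a > 0` with `a ≥ g ‖u‖`. An output contributes only while
the transient term of the IOS estimate exceeds `a`, so where `V ≥ c > 0` the relevant times are
bounded locally uniformly. Hence `max(V, c)` is locally Lipschitz for each `c`. Preceding an input
by a constant one of gain at most `V / 4` postpones all outputs, and since the time weight is
strictly increasing, `V` decreases at a locally uniform rate along the constant input.

For each `c = 2⁻ᵏ`, convolution and a partition of unity turn `max(V, c)` into a smooth function
that keeps the descent along `f` above the level `c`. Smooth ramps of these approximations,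
superposed with rapidly decreasing weights, give a smooth function comparable with `V` at every
scale, and a class `K` minorant of its decay rates on bounded sets is the required `α₃`.

For the direct theorem, a Lyapunov function decreases at a rate at least `α₃(c, R)` along a
trajectory in the ball of radius `R` while it exceeds `c` and the gain of the input. Since BIBS
bounds the states by the initial state and the input, it falls below any level above the gain within
a time depending only on the level and the initial state, and these uniform times assemble into a
class `KL` bound.
-/

/-! ### Comparison functions -/

namespace IsClassK

variable {α κ : ℝ → ℝ}

lemma monotoneOn (hα : IsClassK α) : MonotoneOn α (Ici 0) :=
  hα.2.1.monotoneOn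

lemma nonneg (hα : IsClassK α) {s : ℝ} (hs : 0 ≤ s) : 0 ≤ α s := by
  simpa only [hα.2.2] using hα.monotoneOn self_mem_Ici hs hs

lemma pos (hα : IsClassK α) {s : ℝ} (hs : 0 < s) : 0 < α s := by
  simpa only [hα.2.2] using hα.2.1 self_mem_Ici hs.le hs

lemma max (hα : IsClassK α) (hκ : IsClassK κ) : IsClassK fun s => max (α s) (κ s) :=
  ⟨hα.1.sup hκ.1, fun _ ha _ hb hab => max_lt_max (hα.2.1 ha hb hab) (hκ.2.1 ha hb hab),
    by simp only [hα.2.2, hκ.2.2, max_self]⟩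

lemma comp (hκ : IsClassK κ) (hα : IsClassK α) : IsClassK fun s => κ (α s) :=
  have hmaps : MapsTo α (Ici 0) (Ici 0) := fun _ hs => hα.nonneg hs
  ⟨hκ.1.comp hα.1 hmaps, hκ.2.1.comp hα.2.1 hmaps, by simp only [hα.2.2, hκ.2.2]⟩

lemma const_mul (hα : IsClassK α) {c : ℝ} (hc : 0 < c) : IsClassK fun s => c * α s :=
  ⟨continuousOn_const.mul hα.1, fun _ ha _ hb hab => mul_lt_mul_of_pos_left (hα.2.1 ha hb hab) hc,
    by simp only [hα.2.2, mul_zero]⟩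

lemma add_id (hα : IsClassK α) : IsClassK fun s => α s + s :=
  ⟨hα.1.add continuousOn_id, hα.2.1.add strictMonoOn_id, by simp only [hα.2.2, add_zero]⟩

lemma isClassKInfty_add_id (hα : IsClassK α) : IsClassKInfty fun s => α s + s :=
  ⟨hα.add_id, tendsto_atTop_mono' _ ((eventually_ge_atTop 0).mono fun _ hs =>
    le_add_of_nonneg_left (hα.nonneg hs)) tendsto_id⟩

end IsClassK

lemma IsClassKInfty.exists_isClassK_inverse {α : ℝ → ℝ} (hα : IsClassKInfty α) :
    ∃ κ, IsClassK κ ∧ ∀ s, 0 ≤ s → κ (α s) = s := by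
  obtain ⟨⟨hcont, hmono, hzero⟩, htop⟩ := hα
  have hsurj : SurjOn α (Ici 0) (Ici 0) := by
    intro y hy
    obtain ⟨b, hb, hyb⟩ := ((eventually_ge_atTop 0).and (htop.eventually_ge_atTop y)).exists
    obtain ⟨s, hs, rfl⟩ := intermediate_value_Icc hb (hcont.mono Icc_subset_Ici_self)
      ⟨hzero.trans_le hy, hyb⟩
    exact ⟨s, hs.1, rfl⟩
  have hmaps : MapsTo α (Ici 0) (Ici 0) := fun s hs =>
    hzero.symm.trans_le (hmono.monotoneOn self_mem_Ici hs hs)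
  let e : Ici (0 : ℝ) ≃o Ici (0 : ℝ) := StrictMono.orderIsoOfSurjective (hmaps.restrict α _ _)
    (fun a b hab => hmono a.2 b.2 hab) (hmaps.restrict_surjective_iff.2 hsurj)
  let κ : ℝ → ℝ := fun y => e.symm ⟨max 0 y, le_max_left 0 y⟩
  have hκ : ∀ y (hy : y ∈ Ici 0), κ y = e.symm ⟨y, hy⟩ := fun y hy => by
    simp only [κ, max_eq_right (mem_Ici.1 hy)]
  have hleft : ∀ s, 0 ≤ s → κ (α s) = s := fun s hs =>
    (hκ _ (hmaps hs)).trans (congrArg Subtype.val (e.symm_apply_apply ⟨s, hs⟩))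
  refine ⟨κ, ⟨?_, fun a ha b hb hab => ?_, ?_⟩, hleft⟩
  · exact (continuous_subtype_val.comp (e.symm.continuous.comp
      ((continuous_const.max continuous_id).subtype_mk _))).continuousOn
  · rw [hκ a ha, hκ b hb]
    exact e.symm.strictMono hab
  · simpa only [hzero] using hleft 0 le_rfl

/-- The average of `m` over `[0, s]` damped by the factor `s / (1 + s)`: a class-`K` minorant of a
nondecreasing function `m` which is positive on `(0, ∞)`, depending monotonically on `m`. -/
def classKMinorant (m : ℝ → ℝ) (s : ℝ) : ℝ := (∫ τ in (0:ℝ)..s, m τ) / (1 + s)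

section ClassKMinorant

variable {m m' : ℝ → ℝ} {a b s : ℝ}

lemma integral_le_sub_mul_of_monotone (hm : Monotone m) (hab : a ≤ b) :
    ∫ τ in a..b, m τ ≤ (b - a) * m b := by
  simpa using intervalIntegral.integral_mono_on hab (hm.intervalIntegrable (μ := volume))
    (intervalIntegrable_const (c := m b)) fun r hr => hm hr.2

lemma sub_mul_le_integral_of_monotone (hm : Monotone m) (hab : a ≤ b) :
    (b - a) * m a ≤ ∫ τ in a..b, m τ := by
  simpa using intervalIntegral.integral_mono_on hab (intervalIntegrable_const (c := m a))
    (hm.intervalIntegrable (μ := volume)) fun r hr => hm hr.1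

lemma isClassK_classKMinorant (hm : Monotone m) (hpos : ∀ s, 0 < s → 0 < m s) :
    IsClassK (classKMinorant m) := by
  refine ⟨?_, fun s hs t ht hst => ?_, by simp [classKMinorant]⟩
  · refine (intervalIntegral.continuous_primitive (fun _ _ => hm.intervalIntegrable)
      0).continuousOn.div (by fun_prop) fun s hs => ?_
    exact (add_pos_of_pos_of_nonneg one_pos hs).ne'
  · rw [mem_Ici] at hs ht
    have hpos_integral : 0 < ∫ τ in s..t, m τ :=
      intervalIntegral.intervalIntegral_pos_of_pos_on hm.intervalIntegrable
        (fun r hr => hpos r (hs.trans_lt hr.1)) hst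
    have hbefore := integral_le_sub_mul_of_monotone hm hs
    have hafter := sub_mul_le_integral_of_monotone hm hst.le
    rw [sub_zero] at hbefore
    rw [classKMinorant, classKMinorant, div_lt_div_iff₀ (by positivity) (by positivity),
      ← intervalIntegral.integral_add_adjacent_intervals (b := s) (c := t) hm.intervalIntegrable
        hm.intervalIntegrable]
    nlinarith [mul_le_mul_of_nonneg_left hbefore (sub_nonneg.2 hst.le),
      mul_le_mul_of_nonneg_left hafter hs]

lemma classKMinorant_le (hm : Monotone m) (h0 : 0 ≤ m 0) (hs : 0 ≤ s) :
    classKMinorant m s ≤ m s := by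
  have hint := integral_le_sub_mul_of_monotone hm hs
  rw [classKMinorant, div_le_iff₀ (by positivity)]
  linarith [h0.trans (hm hs)]

lemma classKMinorant_mono (hm : Monotone m) (hm' : Monotone m') (h : ∀ s, m s ≤ m' s)
    (hs : 0 ≤ s) : classKMinorant m s ≤ classKMinorant m' s := by
  unfold classKMinorant
  gcongr
  exact intervalIntegral.integral_mono_on hs hm.intervalIntegrable hm'.intervalIntegrable
    fun r _ => h r

lemma tendsto_classKMinorant (hm : Monotone m) (h0 : 0 ≤ m 0) (htop : Tendsto m atTop atTop) :
    Tendsto (classKMinorant m) atTop atTop := by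
  have hquarter : Tendsto (fun s : ℝ => m (s / 2) / 4) atTop atTop :=
    (htop.comp (tendsto_id.atTop_div_const (by norm_num))).atTop_div_const (by norm_num)
  refine tendsto_atTop_mono' _ ?_ hquarter
  filter_upwards [eventually_ge_atTop (1:ℝ)] with s hs
  have hlate := sub_mul_le_integral_of_monotone hm (by linarith : s / 2 ≤ s)
  have hearly : 0 ≤ ∫ τ in (0:ℝ)..(s / 2), m τ :=
    intervalIntegral.integral_nonneg (by linarith) fun r hr => h0.trans (hm hr.1)
  have hmid : 0 ≤ m (s / 2) := h0.trans (hm (by linarith))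
  rw [classKMinorant, le_div_iff₀ (by linarith),
    ← intervalIntegral.integral_add_adjacent_intervals (b := s / 2) hm.intervalIntegrable
      hm.intervalIntegrable]
  nlinarith

end ClassKMinorant

/-- The average of `ψ` over `[s, 2 s]`, rescaled to a fixed interval so that it also makes sense
for `s = 0`: a continuous majorant of a nondecreasing function `ψ`. -/
def dilationAverage (ψ : ℝ → ℝ) (s : ℝ) : ℝ := ∫ τ in (1:ℝ)..2, ψ (s * τ)

section DilationAverage

variable {ψ ψ' : ℝ → ℝ} {s s' : ℝ}

lemma intervalIntegrable_dilation (hψ : Monotone ψ) (hs : 0 ≤ s) (a b : ℝ) :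
    IntervalIntegrable (fun τ => ψ (s * τ)) volume a b :=
  (hψ.comp (monotone_mul_left_of_nonneg hs)).intervalIntegrable

lemma dilationAverage_le_dilationAverage (hψ : Monotone ψ) (hψ' : Monotone ψ')
    (h : ∀ r, ψ r ≤ ψ' r) (hs : 0 ≤ s) (hss' : s ≤ s') :
    dilationAverage ψ s ≤ dilationAverage ψ' s' :=
  intervalIntegral.integral_mono_on one_le_two (intervalIntegrable_dilation hψ hs 1 2)
    (intervalIntegrable_dilation hψ' (hs.trans hss') 1 2) fun _ hτ =>
      (hψ (mul_le_mul_of_nonneg_right hss' (zero_le_one.trans hτ.1))).trans (h _)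

lemma le_dilationAverage (hψ : Monotone ψ) (hs : 0 ≤ s) : ψ s ≤ dilationAverage ψ s := by
  have := intervalIntegral.integral_mono_on one_le_two (intervalIntegrable_const (c := ψ s))
    (intervalIntegrable_dilation hψ hs 1 2) fun τ hτ => hψ (le_mul_of_one_le_right hs hτ.1)
  norm_num at this
  exact this

lemma dilationAverage_le (hψ : Monotone ψ) (hs : 0 ≤ s) : dilationAverage ψ s ≤ ψ (s * 2) := by
  have := intervalIntegral.integral_mono_on one_le_two (intervalIntegrable_dilation hψ hs 1 2)
    (intervalIntegrable_const (c := ψ (s * 2)))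
    fun τ hτ => hψ (mul_le_mul_of_nonneg_left hτ.2 hs)
  norm_num at this
  exact this

lemma dilationAverage_zero (ψ : ℝ → ℝ) : dilationAverage ψ 0 = ψ 0 := by
  norm_num [dilationAverage]

lemma continuousOn_dilationAverage (hψ : Monotone ψ) (hψ0 : ContinuousWithinAt ψ (Ici 0) 0) :
    ContinuousOn (dilationAverage ψ) (Ici 0) := by
  intro s hs
  rcases eq_or_lt_of_le (mem_Ici.1 hs) with rfl | hs
  · have hdouble : Tendsto (fun s : ℝ => s * 2) (𝓝[≥] 0) (𝓝[≥] 0) :=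
      tendsto_nhdsWithin_iff.2 ⟨by simpa using
        ((continuous_mul_const (2 : ℝ)).tendsto 0).mono_left nhdsWithin_le_nhds,
        eventually_mem_nhdsWithin.mono fun s hs => mul_nonneg (mem_Ici.1 hs) zero_le_two⟩
    rw [ContinuousWithinAt, dilationAverage_zero]
    exact tendsto_of_tendsto_of_tendsto_of_le_of_le' hψ0 (hψ0.tendsto.comp hdouble)
      (eventually_mem_nhdsWithin.mono fun _ => le_dilationAverage hψ)
      (eventually_mem_nhdsWithin.mono fun _ => dilationAverage_le hψ)
  · have hprim : Continuous fun b => ∫ τ in (0:ℝ)..b, ψ τ :=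
      intervalIntegral.continuous_primitive (fun _ _ => hψ.intervalIntegrable) 0
    have hquot : ContinuousAt
        (fun s : ℝ => s⁻¹ * ((∫ τ in (0:ℝ)..s * 2, ψ τ) - ∫ τ in (0:ℝ)..s * 1, ψ τ)) s :=
      (continuousAt_inv₀ hs.ne').mul (by fun_prop)
    refine (hquot.congr ?_).continuousWithinAt
    filter_upwards [lt_mem_nhds hs] with r hr
    rw [intervalIntegral.integral_interval_sub_left hψ.intervalIntegrable hψ.intervalIntegrable,
      dilationAverage, intervalIntegral.integral_comp_mul_left ψ hr.ne', smul_eq_mul]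

end DilationAverage

lemma exists_isClassKL_ge {φ : ℝ → ℝ → ℝ} (hmono : ∀ t, Monotone fun s => φ s t)
    (hanti : ∀ s, Antitone (φ s)) (hzero : ∀ t, 0 ≤ t → φ 0 t = 0)
    (hcont : ∀ t, 0 ≤ t → ContinuousWithinAt (fun s => φ s t) (Ici 0) 0)
    (hlim : ∀ s, Tendsto (φ s) atTop (𝓝 0)) :
    ∃ β, IsClassKL β ∧ ∀ s, 0 ≤ s → ∀ t, φ s t ≤ β s t := by
  refine ⟨fun s t => dilationAverage (fun r => φ r t) s + s * Real.exp (-t),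
    ⟨fun t ht => ⟨?_, fun a ha b _ hab => ?_, ?_⟩, fun s hs => ⟨fun a _ b _ hab => ?_, ?_⟩⟩,
    fun s hs t => ?_⟩
  · exact (continuousOn_dilationAverage (hmono t) (hcont t ht)).add (by fun_prop)
  · exact add_lt_add_of_le_of_lt
      (dilationAverage_le_dilationAverage (hmono t) (hmono t) (fun _ => le_rfl) ha hab.le)
      (mul_lt_mul_of_pos_right hab (Real.exp_pos _))
  · simp [dilationAverage_zero, hzero t ht]
  · exact add_le_add
      (dilationAverage_le_dilationAverage (hmono b) (hmono a) (fun r => hanti r hab) hs le_rfl)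
      (mul_le_mul_of_nonneg_left (Real.exp_le_exp.2 (neg_le_neg hab)) hs)
  · have haverage : Tendsto (fun t => dilationAverage (fun r => φ r t) s) atTop (𝓝 0) :=
      tendsto_of_tendsto_of_tendsto_of_le_of_le (hlim s) (hlim (s * 2))
        (fun t => le_dilationAverage (hmono t) hs) fun t => dilationAverage_le (hmono t) hs
    simpa using haverage.add (Real.tendsto_exp_neg_atTop_nhds_zero.const_mul s)
  · exact (le_dilationAverage (hmono t) hs).trans
      (le_add_of_nonneg_right (mul_nonneg hs (Real.exp_pos _).le))

section UniformAttraction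

variable {ι : Type*} {S : Set ι} {size time value : ι → ℝ} {ω : ℝ → ℝ}

/-- The largest value, or `0` if that is larger, of the members of `S` of size at most `s` which
occur at time `t` or later. -/
def supValueAfter (S : Set ι) (size time value : ι → ℝ) (s t : ℝ) : ℝ :=
  sSup (insert 0 (value '' {i ∈ S | size i ≤ s ∧ t ≤ time i}))

lemma supValueAfter_le {s t c : ℝ} (hc : 0 ≤ c)
    (h : ∀ i ∈ S, size i ≤ s → t ≤ time i → value i ≤ c) :
    supValueAfter S size time value s t ≤ c := by
  refine csSup_le (insert_nonempty _ _) ?_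
  rintro _ (rfl | ⟨i, ⟨hi, his, hit⟩, rfl⟩)
  exacts [hc, h i hi his hit]

lemma bddAbove_values (hω : IsClassK ω) (hsize : ∀ i ∈ S, 0 ≤ size i)
    (hbound : ∀ i ∈ S, value i ≤ ω (size i)) (s t : ℝ) :
    BddAbove (insert 0 (value '' {i ∈ S | size i ≤ s ∧ t ≤ time i})) := by
  refine BddAbove.insert 0 ⟨ω s, ?_⟩
  rintro _ ⟨i, ⟨hi, his, -⟩, rfl⟩
  exact (hbound i hi).trans (hω.monotoneOn (hsize i hi) ((hsize i hi).trans his) his)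

lemma supValueAfter_nonneg (hω : IsClassK ω) (hsize : ∀ i ∈ S, 0 ≤ size i)
    (hbound : ∀ i ∈ S, value i ≤ ω (size i)) (s t : ℝ) :
    0 ≤ supValueAfter S size time value s t :=
  le_csSup (bddAbove_values hω hsize hbound s t) (mem_insert _ _)

lemma supValueAfter_mono (hω : IsClassK ω) (hsize : ∀ i ∈ S, 0 ≤ size i)
    (hbound : ∀ i ∈ S, value i ≤ ω (size i)) {s s' t t' : ℝ} (hs : s ≤ s') (ht : t' ≤ t) :
    supValueAfter S size time value s t ≤ supValueAfter S size time value s' t' :=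
  csSup_le_csSup (bddAbove_values hω hsize hbound s' t') (insert_nonempty _ _)
    (insert_subset_insert (image_mono fun _ ⟨hi, his, hit⟩ => ⟨hi, his.trans hs, ht.trans hit⟩))

lemma exists_isClassKL_of_uniform_attraction (hω : IsClassK ω) (hsize : ∀ i ∈ S, 0 ≤ size i)
    (hbound : ∀ i ∈ S, value i ≤ ω (size i))
    (hattr : ∀ s, ∀ ε > 0, ∃ T, ∀ i ∈ S, size i ≤ s → T ≤ time i → value i ≤ ε) :
    ∃ β, IsClassKL β ∧ ∀ i ∈ S, value i ≤ β (size i) (time i) := by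
  have hnonneg := supValueAfter_nonneg (time := time) hω hsize hbound
  have hle : ∀ s, 0 ≤ s → ∀ t, supValueAfter S size time value s t ≤ ω s := fun s hs t =>
    supValueAfter_le (hω.nonneg hs) fun i hi his _ =>
      (hbound i hi).trans (hω.monotoneOn (hsize i hi) hs his)
  have hzero : ∀ t, supValueAfter S size time value 0 t = 0 := fun t =>
    le_antisymm ((hle 0 le_rfl t).trans_eq hω.2.2) (hnonneg 0 t)
  have hcont : ∀ t,
      ContinuousWithinAt (fun s => supValueAfter S size time value s t) (Ici 0) 0 := by
    intro t
    have hω0 : Tendsto ω (𝓝[≥] 0) (𝓝 0) := by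
      simpa only [hω.2.2] using (hω.1 0 self_mem_Ici).tendsto
    rw [ContinuousWithinAt, hzero]
    exact squeeze_zero' (Eventually.of_forall fun s => hnonneg s t)
      (eventually_mem_nhdsWithin.mono fun s hs => hle s hs t) hω0
  have hlim : ∀ s, Tendsto (supValueAfter S size time value s) atTop (𝓝 0) := by
    intro s
    refine (nhds_basis_Icc_pos 0).tendsto_right_iff.2 fun ε hε => ?_
    obtain ⟨T, hT⟩ := hattr s ε hε
    filter_upwards [eventually_ge_atTop T] with t ht
    have hle : supValueAfter S size time value s t ≤ ε :=
      supValueAfter_le hε.le fun i hi his hit => hT i hi his (ht.trans hit)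
    constructor <;> linarith [hnonneg s t]
  obtain ⟨β, hβ, hle_β⟩ := exists_isClassKL_ge (φ := supValueAfter S size time value)
    (fun t s s' hs => supValueAfter_mono hω hsize hbound hs le_rfl)
    (fun s t t' ht => supValueAfter_mono hω hsize hbound le_rfl ht)
    (fun t _ => hzero t) (fun t _ => hcont t) hlim
  refine ⟨β, hβ, fun i hi => le_trans ?_ (hle_β (size i) (hsize i hi) (time i))⟩
  exact le_csSup (bddAbove_values hω hsize hbound _ _)
    (mem_insert_of_mem _ (mem_image_of_mem _ ⟨hi, le_rfl, le_rfl⟩))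

end UniformAttraction

section Decay

variable {ι : Type*} {S : Set ι} {size time value W : ι → ℝ} {α₁ α₂ : ℝ → ℝ} {ρ : ℝ → ℝ → ℝ}

lemma exists_isClassKL_of_decay (hα₁ : IsClassKInfty α₁) (hα₂ : IsClassK α₂)
    (hρ : ∀ s ∈ Ici (0 : ℝ), IsClassK fun c => ρ c s)
    (hanti : ∀ c ∈ Ici (0 : ℝ), AntitoneOn (ρ c) (Ici 0)) (hsize : ∀ i ∈ S, 0 ≤ size i)
    (htime : ∀ i ∈ S, 0 ≤ time i) (hvalue : ∀ i ∈ S, α₁ (value i) ≤ W i)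
    (hvalue0 : ∀ i ∈ S, 0 ≤ value i)
    (hdecay : ∀ i ∈ S, ∀ c, 0 ≤ c → c < W i → W i ≤ α₂ (size i) - ρ c (size i) * time i) :
    ∃ β, IsClassKL β ∧ ∀ i ∈ S, value i ≤ β (size i) (time i) := by
  obtain ⟨κ, hκ, hκα₁⟩ := hα₁.exists_isClassK_inverse
  refine exists_isClassKL_of_uniform_attraction (hκ.comp hα₂) hsize (fun i hi => ?_)
    fun s ε hε => ?_
  · have hWα₂ : W i ≤ α₂ (size i) := by
      rcases le_or_gt (W i) 0 with hW | hW
      · exact hW.trans (hα₂.nonneg (hsize i hi))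
      · simpa only [(hρ _ (hsize i hi)).2.2, zero_mul, sub_zero] using hdecay i hi 0 le_rfl hW
    rw [← hκα₁ _ (hvalue0 i hi)]
    exact hκ.monotoneOn (hα₁.1.nonneg (hvalue0 i hi)) (hα₂.nonneg (hsize i hi))
      ((hvalue i hi).trans hWα₂)
  · let s' := max s 0
    have hs' : 0 ≤ s' := le_max_right _ _
    have hα₁ε : 0 < α₁ ε := hα₁.1.pos hε
    have hrate : 0 < ρ (α₁ ε) s' := (hρ s' hs').pos hα₁ε
    refine ⟨α₂ s' / ρ (α₁ ε) s', fun i hi his hT => ?_⟩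
    by_contra! hlarge
    have hεW : α₁ ε < W i := (hα₁.1.2.1 hε.le (hvalue0 i hi) hlarge).trans_le (hvalue i hi)
    have hsize' : size i ≤ s' := his.trans (le_max_left _ _)
    have hW : W i ≤ 0 :=
      calc W i ≤ α₂ (size i) - ρ (α₁ ε) (size i) * time i := hdecay i hi _ hα₁ε.le hεW
        _ ≤ α₂ s' - ρ (α₁ ε) s' * time i := sub_le_sub (hα₂.monotoneOn (hsize i hi) hs' hsize')
          (mul_le_mul_of_nonneg_right (hanti _ hα₁ε.le (hsize i hi) hs' hsize') (htime i hi))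
        _ ≤ 0 := sub_nonpos.2 ((div_le_iff₀' hrate).1 hT)
    exact (hα₁ε.trans hεW).not_ge hW

end Decay

/-! ### Smooth series with small coefficients -/

lemma exists_pos_summable_mul {ι : Type*} [Countable ι] [Nonempty ι] {C : ι → ℕ → ℝ}
    (hC : ∀ i k, 0 ≤ C i k) :
    ∃ d : ℕ → ℝ, (∀ k, 0 < d k) ∧ ∀ i, Summable fun k => d k * C i k := by
  obtain ⟨e, he⟩ := exists_surjective_nat ι
  let D : ℕ → ℝ := fun k => 1 + ∑ n ∈ Finset.range (k + 1), C (e n) k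
  have hD : ∀ k, 0 < D k := fun k =>
    add_pos_of_pos_of_nonneg one_pos (Finset.sum_nonneg fun _ _ => hC _ _)
  refine ⟨fun k => (1 / 2) ^ k / D k, fun k => div_pos (by positivity) (hD k), fun i => ?_⟩
  obtain ⟨n, rfl⟩ := he i
  refine Summable.of_norm_bounded_eventually_nat summable_geometric_two ?_
  filter_upwards [eventually_ge_atTop n] with k hk
  have hle : C (e n) k ≤ D k :=
    (Finset.single_le_sum (f := fun n => C (e n) k) (fun _ _ => hC _ _)
      (Finset.mem_range_succ_iff.2 hk)).trans (le_add_of_nonneg_left zero_le_one)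
  rw [Real.norm_of_nonneg (mul_nonneg (div_pos (by positivity) (hD k)).le (hC _ _)),
    div_mul_eq_mul_div]
  exact div_le_of_le_mul₀ (hD k).le (by positivity) (by gcongr)

section SmoothSeries

lemma hasFDerivAt_tsum_of_locally_summable {E F : Type*} [NormedAddCommGroup E] [NormedSpace ℝ E]
    [NormedAddCommGroup F] [NormedSpace ℝ F] [CompleteSpace F] {g : ℕ → E → F}
    (hdiff : ∀ k, Differentiable ℝ (g k)) (hsum : ∀ ξ, Summable fun k => g k ξ)
    (hbound : ∀ R : ℝ, ∃ v : ℕ → ℝ, Summable v ∧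
      ∀ k, ∀ ξ ∈ Metric.ball 0 R, ‖fderiv ℝ (g k) ξ‖ ≤ v k) (ξ : E) :
    HasFDerivAt (fun ξ => ∑' k, g k ξ) (∑' k, fderiv ℝ (g k) ξ) ξ := by
  obtain ⟨v, hv, hle⟩ := hbound (‖ξ‖ + 1)
  have hξ : ξ ∈ Metric.ball (0 : E) (‖ξ‖ + 1) := by simp
  exact hasFDerivAt_tsum_of_isPreconnected hv Metric.isOpen_ball
    (convex_ball _ _).isPreconnected (fun k ζ _ => (hdiff k ζ).hasFDerivAt) hle hξ (hsum ξ) hξ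

/-- A family of functions all of whose derivatives are summable uniformly on bounded sets, so that
its sum can be differentiated term by term arbitrarily often. -/
def HasLocallySummableDerivs {E F : Type*} [NormedAddCommGroup E] [NormedSpace ℝ E]
    [NormedAddCommGroup F] [NormedSpace ℝ F] (g : ℕ → E → F) : Prop :=
  ∀ (i : ℕ) (R : ℝ), ∃ v : ℕ → ℝ, Summable v ∧
    ∀ k, ∀ ξ ∈ Metric.ball 0 R, ‖iteratedFDeriv ℝ i (g k) ξ‖ ≤ v k

namespace HasLocallySummableDerivs

variable {E F : Type*} [NormedAddCommGroup E] [NormedSpace ℝ E] [NormedAddCommGroup F]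
  [NormedSpace ℝ F] [CompleteSpace F] {g : ℕ → E → F}

lemma summable_iteratedFDeriv (hg : HasLocallySummableDerivs g) (i : ℕ) (ξ : E) :
    Summable fun k => iteratedFDeriv ℝ i (g k) ξ := by
  obtain ⟨v, hv, hle⟩ := hg i (‖ξ‖ + 1)
  exact hv.of_norm_bounded fun k => hle k ξ (by simp)

lemma summable (hg : HasLocallySummableDerivs g) (ξ : E) : Summable fun k => g k ξ := by
  obtain ⟨v, hv, hle⟩ := hg 0 (‖ξ‖ + 1)
  refine hv.of_norm_bounded fun k => ?_
  simpa only [norm_iteratedFDeriv_zero] using hle k ξ (by simp)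

lemma summable_fderiv (hg : HasLocallySummableDerivs g) (ξ : E) :
    Summable fun k => fderiv ℝ (g k) ξ := by
  obtain ⟨v, hv, hle⟩ := hg 1 (‖ξ‖ + 1)
  refine hv.of_norm_bounded fun k => ?_
  simpa only [norm_iteratedFDeriv_one] using hle k ξ (by simp)

lemma hasFDerivAt_tsum (hg : HasLocallySummableDerivs g) (hdiff : ∀ k, Differentiable ℝ (g k))
    (ξ : E) : HasFDerivAt (fun ξ => ∑' k, g k ξ) (∑' k, fderiv ℝ (g k) ξ) ξ :=
  hasFDerivAt_tsum_of_locally_summable hdiff hg.summable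
    (fun R => by simpa only [norm_iteratedFDeriv_one] using hg 1 R) ξ

lemma hasFDerivAt_tsum_iteratedFDeriv (hg : HasLocallySummableDerivs g)
    (hsmooth : ∀ k, ContDiff ℝ (⊤ : ℕ∞) (g k)) (i : ℕ) (ξ : E) :
    HasFDerivAt (fun ξ => ∑' k, iteratedFDeriv ℝ i (g k) ξ)
      (∑' k, fderiv ℝ (iteratedFDeriv ℝ i (g k)) ξ) ξ :=
  hasFDerivAt_tsum_of_locally_summable
    (fun k => (hsmooth k).differentiable_iteratedFDeriv (by exact_mod_cast ENat.natCast_lt_top i))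
    (hg.summable_iteratedFDeriv i)
    (fun R => by simpa only [norm_fderiv_iteratedFDeriv] using hg (i + 1) R) ξ

lemma iteratedFDeriv_tsum (hg : HasLocallySummableDerivs g)
    (hsmooth : ∀ k, ContDiff ℝ (⊤ : ℕ∞) (g k)) (i : ℕ) :
    iteratedFDeriv ℝ i (fun ξ => ∑' k, g k ξ) = fun ξ => ∑' k, iteratedFDeriv ℝ i (g k) ξ := by
  induction i with
  | zero =>
    funext ξ
    simp only [iteratedFDeriv_zero_eq_comp, Function.comp_apply]
    exact (continuousMultilinearCurryFin0 ℝ E F).symm.toContinuousLinearEquiv.map_tsum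
  | succ i ih =>
    funext ξ
    simp only [iteratedFDeriv_succ_eq_comp_left, Function.comp_apply]
    rw [ih, (hg.hasFDerivAt_tsum_iteratedFDeriv hsmooth i ξ).fderiv]
    exact (continuousMultilinearCurryLeftEquiv ℝ
      (fun _ : Fin (i + 1) => E) F).symm.toContinuousLinearEquiv.map_tsum

lemma contDiff_tsum (hg : HasLocallySummableDerivs g)
    (hsmooth : ∀ k, ContDiff ℝ (⊤ : ℕ∞) (g k)) : ContDiff ℝ (⊤ : ℕ∞) fun ξ => ∑' k, g k ξ := by
  refine contDiff_of_differentiable_iteratedFDeriv fun i _ ξ => ?_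
  rw [hg.iteratedFDeriv_tsum hsmooth]
  exact (hg.hasFDerivAt_tsum_iteratedFDeriv hsmooth i ξ).differentiableAt

end HasLocallySummableDerivs

lemma exists_pos_hasLocallySummableDerivs {E F : Type*} [NormedAddCommGroup E] [NormedSpace ℝ E]
    [ProperSpace E] [NormedAddCommGroup F] [NormedSpace ℝ F] {g : ℕ → E → F}
    (hg : ∀ k, ContDiff ℝ (⊤ : ℕ∞) (g k)) :
    ∃ d : ℕ → ℝ, (∀ k, 0 < d k) ∧ ∀ c : ℕ → ℝ, (∀ k, 0 ≤ c k ∧ c k ≤ d k) →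
      HasLocallySummableDerivs fun k ξ => c k • g k ξ := by
  have hbound : ∀ (i R k : ℕ), ∃ C, 0 ≤ C ∧
      ∀ ξ ∈ Metric.ball 0 (R : ℝ), ‖iteratedFDeriv ℝ i (g k) ξ‖ ≤ C := fun i R k => by
    obtain ⟨C, hC⟩ := (isCompact_closedBall (0 : E) R).exists_bound_of_continuousOn
      ((hg k).continuous_iteratedFDeriv (m := i) (by exact_mod_cast le_top)).continuousOn
    exact ⟨max 0 C, le_max_left _ _, fun ξ hξ =>
      (hC ξ (Metric.ball_subset_closedBall hξ)).trans (le_max_right _ _)⟩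
  choose C hC0 hC using hbound
  obtain ⟨d, hd, hsum⟩ := exists_pos_summable_mul (C := fun q : ℕ × ℕ => C q.1 q.2)
    fun q => hC0 q.1 q.2
  refine ⟨d, hd, fun c hc i R => ⟨_, hsum (i, ⌈R⌉₊), fun k ξ hξ => ?_⟩⟩
  have hsmul : iteratedFDeriv ℝ i (fun ξ => c k • g k ξ) ξ = c k • iteratedFDeriv ℝ i (g k) ξ :=
    iteratedFDeriv_const_smul_apply (((hg k).of_le (by exact_mod_cast le_top)).contDiffAt)
  rw [hsmul, norm_smul, Real.norm_of_nonneg (hc k).1]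
  exact mul_le_mul (hc k).2 (hC i _ k ξ (Metric.ball_subset_ball (Nat.le_ceil R) hξ))
    (norm_nonneg _) (hd k).le

end SmoothSeries

/-! ### Smooth approximation preserving descent -/

section SmoothDescent

variable {E : Type*} [NormedAddCommGroup E] [NormedSpace ℝ E]

/-- The function `Q` decreases at a positive rate, uniformly for `ξ` in bounded sets, along short
segments in the directions `v ∈ D ξ`. The segments start at arbitrary points near `ξ`, which is
what makes the property survive averaging. -/
def HasUniformDescent (Q : E → ℝ) (D : E → Set E) : Prop :=
  ∀ R : ℝ, ∃ δ > 0, ∃ r > 0, ∃ τ₀ > 0, ∀ ξ, ‖ξ‖ ≤ R → ∀ v ∈ D ξ,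
    ∀ ζ ∈ Metric.closedBall ξ r, ∀ τ ∈ Ioo 0 τ₀, Q (ζ + τ • v) ≤ Q ζ - δ * τ

lemma fderiv_apply_le_of_descent {M : E → ℝ} {ξ v : E} {δ τ₀ : ℝ} (hM : DifferentiableAt ℝ M ξ)
    (hτ₀ : 0 < τ₀) (hdesc : ∀ τ ∈ Ioo 0 τ₀, M (ξ + τ • v) ≤ M ξ - δ * τ) :
    fderiv ℝ M ξ v ≤ -δ := by
  have hslope : Tendsto (fun τ : ℝ => τ⁻¹ • (M (ξ + τ • v) - M ξ)) (𝓝[>] 0)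
      (𝓝 (fderiv ℝ M ξ v)) :=
    (hM.hasFDerivAt.hasLineDerivAt v).tendsto_slope_zero_right
  refine le_of_tendsto hslope ?_
  filter_upwards [Ioo_mem_nhdsGT hτ₀] with τ hτ
  rw [smul_eq_mul, inv_mul_le_iff₀ hτ.1]
  linarith [hdesc τ hτ]

section Convolution

variable [FiniteDimensional ℝ E] [MeasurableSpace E] [BorelSpace E] {μ : Measure E}
  [μ.IsAddHaarMeasure] (φ : ContDiffBump (0 : E)) {Q : E → ℝ}

local notation "φ⋆Q" => convolution (φ.normed μ) Q (ContinuousLinearMap.lsmul ℝ ℝ) μ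

lemma normed_convolution_add_le (hQ : Continuous Q) {ξ w : E} {d : ℝ}
    (hdesc : ∀ ζ ∈ Metric.closedBall ξ φ.rOut, Q (ζ + w) ≤ Q ζ - d) :
    φ⋆Q (ξ + w) ≤ φ⋆Q ξ - d := by
  have hint : ∀ ζ, Integrable (fun t => φ.normed μ t * Q (ζ - t)) μ := fun ζ =>
    ((φ.continuous_normed.mul (by fun_prop)).integrable_of_hasCompactSupport
      φ.hasCompactSupport_normed.mul_right)
  have hconst : ∫ t, φ.normed μ t * d ∂μ = d := by
    rw [integral_mul_const, φ.integral_normed, one_mul]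
  simp only [convolution_def, ContinuousLinearMap.lsmul_apply, smul_eq_mul]
  rw [← hconst, ← integral_sub (hint ξ) (φ.integrable_normed.mul_const d)]
  refine integral_mono (hint _) ((hint ξ).sub (φ.integrable_normed.mul_const d)) fun t => ?_
  dsimp only
  rw [← mul_sub]
  by_cases ht : t ∈ Metric.ball 0 φ.rOut
  · refine mul_le_mul_of_nonneg_left ?_ (φ.nonneg_normed t)
    rw [add_sub_right_comm]
    exact hdesc _ (by simpa using (mem_ball_zero_iff.1 ht).le)
  · rw [← φ.support_normed_eq (μ := μ), Function.notMem_support] at ht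
    simp only [ht, zero_mul, le_refl]

end Convolution

open scoped Manifold ContDiff

lemma fderiv_finsum_smoothPartitionOfUnity_smul_apply {ι : Type*}
    (ρ : SmoothPartitionOfUnity ι 𝓘(ℝ, E) E) {M : ι → E → ℝ} (hM : ∀ i, Differentiable ℝ (M i))
    (ξ v : E) (q : ℝ) :
    fderiv ℝ (fun ζ => ∑ᶠ i, ρ i ζ • M i ζ) ξ v = ∑ i ∈ ρ.fintsupport ξ,
      (ρ i ξ * fderiv ℝ (M i) ξ v + (M i ξ - q) * fderiv ℝ (ρ i) ξ v) := by
  set s := ρ.fintsupport ξ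
  have hρ : ∀ i, DifferentiableAt ℝ (ρ i) ξ := fun i =>
    (ρ i).contMDiff.contDiff.differentiable (by simp) ξ
  -- Since `∑ i, ρ i = 1`, subtracting the constant `q` from all the `M i` only shifts the sum.
  have hlocal : (fun ζ => ∑ᶠ i, ρ i ζ • M i ζ) =ᶠ[𝓝 ξ]
      fun ζ => q + ∑ i ∈ s, ρ i ζ * (M i ζ - q) := by
    filter_upwards [ρ.eventually_finsupport_subset ξ] with ζ hζ
    have hsum := ρ.sum_finsupport' ζ (mem_univ ζ) hζ
    rw [← ρ.sum_finsupport_smul_eq_finsum, Finset.sum_subset hζ fun i _ hi => by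
      rw [ρ.mem_finsupport, Function.notMem_support] at hi; rw [hi, zero_smul]]
    simp only [mul_sub, Finset.sum_sub_distrib, ← Finset.sum_mul, smul_eq_mul]
    rw [hsum]
    ring
  have hderiv : HasFDerivAt (fun ζ => q + ∑ i ∈ s, ρ i ζ * (M i ζ - q))
      (∑ i ∈ s, (ρ i ξ • fderiv ℝ (M i) ξ + (M i ξ - q) • fderiv ℝ (ρ i) ξ)) ξ :=
    (HasFDerivAt.fun_sum fun i _ =>
      (hρ i).hasFDerivAt.mul ((hM i ξ).hasFDerivAt.sub_const q)).const_add q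
  rw [hlocal.fderiv_eq, hderiv.fderiv]
  simp only [sum_apply, add_apply, smul_apply, smul_eq_mul]

lemma fderiv_finsum_smoothPartitionOfUnity_smul_apply_le {ι : Type*}
    (ρ : SmoothPartitionOfUnity ι 𝓘(ℝ, E) E) {M : ι → E → ℝ} (hM : ∀ i, Differentiable ℝ (M i))
    {ξ v : E} {q δ ε : ℝ} (hdesc : ∀ i ∈ ρ.fintsupport ξ, fderiv ℝ (M i) ξ v ≤ -δ)
    (herr : ∀ i ∈ ρ.fintsupport ξ, (M i ξ - q) * fderiv ℝ (ρ i) ξ v ≤ ε) :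
    fderiv ℝ (fun ζ => ∑ᶠ i, ρ i ζ • M i ζ) ξ v ≤ (ρ.fintsupport ξ).card * ε - δ := by
  rw [fderiv_finsum_smoothPartitionOfUnity_smul_apply ρ hM ξ v q]
  calc _ ≤ ∑ i ∈ ρ.fintsupport ξ, (ρ i ξ * -δ + ε) := Finset.sum_le_sum fun i hi =>
        add_le_add (mul_le_mul_of_nonneg_left (hdesc i hi) (ρ.nonneg i ξ)) (herr i hi)
    _ = (ρ.fintsupport ξ).card * ε - δ := by
        rw [Finset.sum_add_distrib, ← Finset.sum_mul, Finset.sum_const, nsmul_eq_mul,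
          ρ.sum_finsupport' ξ (mem_univ ξ) (ρ.finsupport_subset_fintsupport ξ)]
        ring

lemma exists_antitone_pos_le {δ : ℕ → ℝ} (hδ : ∀ k, 0 < δ k) :
    ∃ δ' : ℕ → ℝ, Antitone δ' ∧ ∀ k, 0 < δ' k ∧ δ' k ≤ δ k := by
  refine ⟨fun k => (Finset.range (k + 1)).inf' Finset.nonempty_range_add_one δ, fun j k hjk => ?_,
    fun k => ⟨(Finset.lt_inf'_iff _).2 fun i _ => hδ i,
      Finset.inf'_le _ (Finset.self_mem_range_succ k)⟩⟩
  exact Finset.inf'_mono _ (Finset.range_mono (by lia)) _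

lemma exists_pos_le_mul_le {a c : ℝ} (ha : 0 < a) (hc : 0 < c) (b : ℝ) :
    ∃ η > 0, η ≤ c ∧ η * b ≤ a := by
  obtain ⟨η, hη, hlt⟩ := exists_pos_mul_lt ha (max b 0)
  refine ⟨min c η, lt_min hc hη, min_le_left _ _, ?_⟩
  calc min c η * b ≤ min c η * max b 0 := by gcongr; exact le_max_left _ _
    _ ≤ η * max b 0 := by gcongr; exact min_le_right _ _
    _ ≤ a := by linarith

section FiniteDimensional

variable [FiniteDimensional ℝ E] {Q : E → ℝ} {D : E → Set E}

lemma HasUniformDescent.exists_contDiff_approx_on_closedBall (hdesc : HasUniformDescent Q D)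
    (hQ : Continuous Q) (R : ℝ) :
    ∃ δ > 0, ∀ η > 0, ∃ M : E → ℝ, ContDiff ℝ (⊤ : ℕ∞) M ∧
      ∀ ξ, ‖ξ‖ ≤ R → |M ξ - Q ξ| ≤ η ∧ ∀ v ∈ D ξ, fderiv ℝ M ξ v ≤ -δ := by
  borelize E
  obtain ⟨δ, hδ, r, hr, τ₀, hτ₀, hdecr⟩ := hdesc R
  refine ⟨δ, hδ, fun η hη => ?_⟩
  obtain ⟨r', hr', hclose⟩ := Metric.uniformContinuousOn_iff_le.1
    ((isCompact_closedBall (0 : E) (R + 1)).uniformContinuousOn_of_continuous hQ.continuousOn) η hη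
  obtain ⟨s, hs, hsr⟩ := exists_between (lt_min hr (lt_min hr' one_pos))
  rw [lt_min_iff, lt_min_iff] at hsr
  let φ : ContDiffBump (0 : E) := ⟨s / 2, s, half_pos hs, half_lt_self hs⟩
  have hsmooth : ContDiff ℝ (⊤ : ℕ∞)
      (convolution (φ.normed Measure.addHaar) Q (ContinuousLinearMap.lsmul ℝ ℝ) Measure.addHaar) :=
    φ.hasCompactSupport_normed.contDiff_convolution_left _ φ.contDiff_normed hQ.locallyIntegrable
  refine ⟨_, hsmooth, fun ξ hξ => ⟨?_, fun v hv => ?_⟩⟩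
  · rw [← Real.dist_eq]
    refine φ.dist_normed_convolution_le hQ.aestronglyMeasurable fun ζ hζ => ?_
    have hζs : dist ζ ξ < s := hζ
    refine hclose ζ (mem_closedBall_zero_iff.2 ?_) ξ (mem_closedBall_zero_iff.2 ?_) (by linarith)
    · linarith [norm_le_norm_add_norm_sub' ζ ξ, dist_eq_norm ζ ξ]
    · linarith
  · refine fderiv_apply_le_of_descent (hsmooth.differentiable (by simp) ξ) hτ₀ fun τ hτ => ?_
    exact normed_convolution_add_le φ hQ fun ζ hζ =>
      hdecr ξ hξ v hv ζ (Metric.closedBall_subset_closedBall hsr.1.le hζ) τ hτ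

variable (E) in
lemma exists_smoothPartitionOfUnity_annuli :
    ∃ ρ : SmoothPartitionOfUnity ℕ 𝓘(ℝ, E) E,
      ∀ ξ, ρ.fintsupport ξ ⊆ Finset.Icc ⌊‖ξ‖⌋₊ (⌊‖ξ‖⌋₊ + 1) := by
  obtain ⟨ρ, hρ⟩ := SmoothPartitionOfUnity.exists_isSubordinate 𝓘(ℝ, E) isClosed_univ
    (fun j : ℕ => {ξ : E | ‖ξ‖ ∈ Ioo ((j : ℝ) - 1) (j + 1)})
    (fun j => isOpen_Ioo.preimage continuous_norm)
    (fun ξ _ => mem_iUnion.2 ⟨⌊‖ξ‖⌋₊, by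
      linarith [Nat.floor_le (norm_nonneg ξ)], Nat.lt_floor_add_one _⟩)
  refine ⟨ρ, fun ξ i hi => ?_⟩
  obtain ⟨hlt, hgt⟩ := hρ i ((ρ.mem_fintsupport_iff ξ i).1 hi)
  have hfloor := Nat.lt_floor_add_one ‖ξ‖
  have hfloor' := Nat.floor_le (norm_nonneg ξ)
  rw [Finset.mem_Icc, ← Nat.lt_succ_iff, ← Nat.lt_succ_iff]
  constructor <;> (rify; linarith)

lemma exists_bound_fderiv_apply {ρ : E → ℝ} (hρ : Continuous (fderiv ℝ ρ))
    (hD : ∀ R : ℝ, ∃ B, ∀ ξ, ‖ξ‖ ≤ R → ∀ v ∈ D ξ, ‖v‖ ≤ B) (R : ℝ) :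
    ∃ G, ∀ ξ, ‖ξ‖ ≤ R → ∀ v ∈ D ξ, |fderiv ℝ ρ ξ v| ≤ G := by
  obtain ⟨A, hA⟩ := (isCompact_closedBall (0 : E) R).exists_bound_of_continuousOn hρ.continuousOn
  obtain ⟨B, hB⟩ := hD R
  refine ⟨A * B, fun ξ hξ v hv => ((fderiv ℝ ρ ξ).le_opNorm v).trans ?_⟩
  have hAξ := hA ξ (mem_closedBall_zero_iff.2 hξ)
  exact mul_le_mul hAξ (hB ξ hξ v hv) (norm_nonneg _) ((norm_nonneg _).trans hAξ)

/-
The local approximations are glued by a partition of unity. They are so close to each other that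
the gradients of the cutoffs do not destroy the descent.
-/
lemma HasUniformDescent.exists_contDiff_approx (hdesc : HasUniformDescent Q D) (hQ : Continuous Q)
    (hD : ∀ R : ℝ, ∃ B, ∀ ξ, ‖ξ‖ ≤ R → ∀ v ∈ D ξ, ‖v‖ ≤ B) {c : ℝ} (hc : 0 < c) :
    ∃ M : E → ℝ, ContDiff ℝ (⊤ : ℕ∞) M ∧ (∀ ξ, |M ξ - Q ξ| ≤ c) ∧
      ∀ ξ, ∀ v ∈ D ξ, fderiv ℝ M ξ v < 0 := by
  choose δ₀ hδ₀ happrox using fun j : ℕ => hdesc.exists_contDiff_approx_on_closedBall hQ (j + 1)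
  obtain ⟨δ, hanti, hδ⟩ := exists_antitone_pos_le hδ₀
  obtain ⟨ρ, hρ⟩ := exists_smoothPartitionOfUnity_annuli E
  choose G hG using fun j : ℕ => exists_bound_fderiv_apply
    ((ρ j).contMDiff.contDiff.continuous_fderiv (by simp)) hD (j + 1)
  choose η hη hηc hηG using fun j =>
    exists_pos_le_mul_le (show 0 < δ (j + 1) / 4 by linarith [(hδ (j + 1)).1]) hc (G j)
  choose M hM hclose using fun j => happrox j (η j) (hη j)
  have hnear : ∀ ξ, ∀ i ∈ ρ.fintsupport ξ, ‖ξ‖ ≤ i + 1 ∧ i ≤ ⌊‖ξ‖⌋₊ + 1 ∧ ⌊‖ξ‖⌋₊ ≤ i :=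
    fun ξ i hi => by
      obtain ⟨hle, hge⟩ := Finset.mem_Icc.1 (hρ ξ hi)
      exact ⟨(Nat.lt_floor_add_one _).le.trans (by gcongr), hge, hle⟩
  refine ⟨fun ξ => ∑ᶠ i, ρ i ξ • M i ξ, ?_, fun ξ => ?_, fun ξ v hv => ?_⟩
  · exact (ρ.contMDiff_finsum_smul fun i _ _ => (hM i).contMDiff.contMDiffAt).contDiff
  · rw [← Real.dist_eq, ← Metric.mem_closedBall]
    refine ρ.finsum_smul_mem_convex (mem_univ ξ) (fun i hi => ?_) (convex_closedBall _ _)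
    have hi' := ρ.finsupport_subset_fintsupport ξ ((ρ.mem_finsupport ξ).2 hi)
    exact ((hclose i ξ (hnear ξ i hi').1).1).trans (hηc i)
  · set k := ⌊‖ξ‖⌋₊
    have hcard : ((ρ.fintsupport ξ).card : ℝ) ≤ 2 := by
      exact_mod_cast (Finset.card_le_card (hρ ξ)).trans (by rw [Nat.card_Icc]; lia)
    have herr : ∀ i ∈ ρ.fintsupport ξ,
        (M i ξ - Q ξ) * fderiv ℝ (ρ i) ξ v ≤ δ (k + 1) / 4 := fun i hi =>
      calc (M i ξ - Q ξ) * fderiv ℝ (ρ i) ξ v ≤ |M i ξ - Q ξ| * |fderiv ℝ (ρ i) ξ v| :=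
            (le_abs_self _).trans (abs_mul _ _).le
        _ ≤ η i * G i := mul_le_mul (hclose i ξ (hnear ξ i hi).1).1 (hG i ξ (hnear ξ i hi).1 v hv)
            (abs_nonneg _) (hη i).le
        _ ≤ δ (i + 1) / 4 := hηG i
        _ ≤ δ (k + 1) / 4 := by linarith [hanti (Nat.succ_le_succ (hnear ξ i hi).2.2)]
    have hMdesc : ∀ i ∈ ρ.fintsupport ξ, fderiv ℝ (M i) ξ v ≤ -δ (k + 1) := fun i hi =>
      ((hclose i ξ (hnear ξ i hi).1).2 v hv).trans
        (neg_le_neg ((hanti (hnear ξ i hi).2.1).trans (hδ i).2))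
    refine (fderiv_finsum_smoothPartitionOfUnity_smul_apply_le ρ
      (fun i => (hM i).differentiable (by simp)) hMdesc herr).trans_lt ?_
    nlinarith [(hδ (k + 1)).1]

end FiniteDimensional

end SmoothDescent

/-! ### Inputs and trajectories -/

section Inputs

variable {m : ℕ} {u : ℝ → EuclideanSpace ℝ (Fin m)} {C : ℝ}

lemma uNorm_nonneg (u : ℝ → EuclideanSpace ℝ (Fin m)) : 0 ≤ uNorm u := ENNReal.toReal_nonneg

lemma BddInput.ae_norm_le (hb : BddInput u) :
    ∀ᵐ t ∂(volume.restrict (Ici (0 : ℝ))), ‖u t‖ ≤ uNorm u := by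
  filter_upwards [ENNReal.ae_le_essSup (μ := volume.restrict (Ici (0 : ℝ)))
    (fun t => (‖u t‖₊ : ℝ≥0∞))] with t ht
  simpa [uNorm] using ENNReal.toReal_mono hb ht

lemma uNormE_le_of_ae_le (h : ∀ᵐ t ∂(volume.restrict (Ici (0 : ℝ))), ‖u t‖ ≤ C) :
    uNormE u ≤ ENNReal.ofReal C := by
  refine essSup_le_of_ae_le _ ?_
  filter_upwards [h] with t ht
  rw [← ENNReal.ofReal_coe_nnreal, coe_nnnorm]
  exact ENNReal.ofReal_le_ofReal ht

lemma bddInput_of_ae_le (h : ∀ᵐ t ∂(volume.restrict (Ici (0 : ℝ))), ‖u t‖ ≤ C) : BddInput u :=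
  ((uNormE_le_of_ae_le h).trans_lt ENNReal.ofReal_lt_top).ne

lemma uNorm_le_of_ae_le (hC : 0 ≤ C) (h : ∀ᵐ t ∂(volume.restrict (Ici (0 : ℝ))), ‖u t‖ ≤ C) :
    uNorm u ≤ C :=
  ENNReal.toReal_le_of_le_ofReal hC (uNormE_le_of_ae_le h)

lemma isInput_of_ae_le (hu : Measurable u)
    (h : ∀ᵐ t ∂(volume.restrict (Ici (0 : ℝ))), ‖u t‖ ≤ C) : IsInput u :=
  ⟨hu, fun _ _ => ⟨C, ae_restrict_of_ae_restrict_of_subset Icc_subset_Ici_self h⟩⟩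

section Const

variable (μ : EuclideanSpace ℝ (Fin m))

lemma ae_norm_const_le : ∀ᵐ t ∂(volume.restrict (Ici (0 : ℝ))), ‖(fun _ : ℝ => μ) t‖ ≤ ‖μ‖ :=
  ae_of_all _ fun _ => le_rfl

lemma isInput_const : IsInput fun _ : ℝ => μ :=
  isInput_of_ae_le measurable_const (ae_norm_const_le μ)

lemma bddInput_const : BddInput fun _ : ℝ => μ :=
  bddInput_of_ae_le (ae_norm_const_le μ)

lemma uNorm_const_le : uNorm (fun _ : ℝ => μ) ≤ ‖μ‖ :=
  uNorm_le_of_ae_le (norm_nonneg _) (ae_norm_const_le μ)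

lemma uNorm_const_zero : uNorm (fun _ : ℝ => (0 : EuclideanSpace ℝ (Fin m))) = 0 :=
  le_antisymm (by simpa using uNorm_const_le (0 : EuclideanSpace ℝ (Fin m))) (uNorm_nonneg _)

end Const

/-- The input equal to the constant `μ` before time `τ`, followed by `u` started at time `τ`. -/
def concatInput (μ : EuclideanSpace ℝ (Fin m)) (τ : ℝ) (u : ℝ → EuclideanSpace ℝ (Fin m)) :
    ℝ → EuclideanSpace ℝ (Fin m) := fun s => if s < τ then μ else u (s - τ)

variable (μ : EuclideanSpace ℝ (Fin m)) (τ : ℝ)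

lemma measurable_concatInput (hu : Measurable u) : Measurable (concatInput μ τ u) :=
  Measurable.ite measurableSet_Iio measurable_const (hu.comp (measurable_id.sub_const τ))

lemma ae_norm_concatInput_le (hb : BddInput u) :
    ∀ᵐ t ∂(volume.restrict (Ici (0 : ℝ))), ‖concatInput μ τ u t‖ ≤ max ‖μ‖ (uNorm u) := by
  have hu := hb.ae_norm_le
  rw [ae_restrict_iff' measurableSet_Ici] at hu ⊢
  have hshift : ∀ᵐ t, t - τ ∈ Ici (0 : ℝ) → ‖u (t - τ)‖ ≤ uNorm u :=
    (measurePreserving_sub_right volume τ).quasiMeasurePreserving.ae hu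
  filter_upwards [hshift] with t ht _
  unfold concatInput
  split_ifs with hlt
  · exact le_max_left _ _
  · exact (ht (sub_nonneg.2 (not_lt.1 hlt))).trans (le_max_right _ _)

lemma isInput_concatInput (hu : IsInput u) (hb : BddInput u) : IsInput (concatInput μ τ u) :=
  isInput_of_ae_le (measurable_concatInput μ τ hu.1) (ae_norm_concatInput_le μ τ hb)

lemma bddInput_concatInput (hb : BddInput u) : BddInput (concatInput μ τ u) :=
  bddInput_of_ae_le (ae_norm_concatInput_le μ τ hb)

lemma uNorm_concatInput_le (hb : BddInput u) : uNorm (concatInput μ τ u) ≤ max ‖μ‖ (uNorm u) :=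
  uNorm_le_of_ae_le (le_max_of_le_left (norm_nonneg _)) (ae_norm_concatInput_le μ τ hb)

end Inputs

section BoundedSets

variable {E F U : Type*} [NormedAddCommGroup E] [ProperSpace E] [NormedAddCommGroup F]
  [NormedAddCommGroup U] [ProperSpace U]

lemma exists_norm_sub_le_mul_of_locallyLipschitz {h : E → F} (hh : LocallyLipschitz h) (R : ℝ) :
    ∃ L, 0 ≤ L ∧ ∀ a b, ‖a‖ ≤ R → ‖b‖ ≤ R → ‖h a - h b‖ ≤ L * ‖a - b‖ := by
  obtain ⟨K, hK⟩ := (hh.locallyLipschitzOn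
    (s := Metric.closedBall 0 R)).exists_lipschitzOnWith_of_compact (isCompact_closedBall _ _)
  refine ⟨K, K.2, fun a b ha hb => ?_⟩
  simpa only [dist_eq_norm] using
    hK.dist_le_mul a (mem_closedBall_zero_iff.2 ha) b (mem_closedBall_zero_iff.2 hb)

variable {f : E → U → F}

lemma exists_norm_sub_le_mul_of_locallyLipschitz_uncurry
    (hf : LocallyLipschitz (Function.uncurry f)) (R r : ℝ) :
    ∃ L, 0 ≤ L ∧ ∀ a b μ, ‖a‖ ≤ R → ‖b‖ ≤ R → ‖μ‖ ≤ r → ‖f a μ - f b μ‖ ≤ L * ‖a - b‖ := by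
  obtain ⟨L, hL, hLip⟩ := exists_norm_sub_le_mul_of_locallyLipschitz hf (max R r)
  refine ⟨L, hL, fun a b μ ha hb hμ => ?_⟩
  simpa using hLip (a, μ) (b, μ) (max_le_max ha hμ) (max_le_max hb hμ)

lemma exists_norm_le_of_continuous_uncurry (hf : Continuous (Function.uncurry f)) (R r : ℝ) :
    ∃ B, 0 ≤ B ∧ ∀ a μ, ‖a‖ ≤ R → ‖μ‖ ≤ r → ‖f a μ‖ ≤ B := by
  obtain ⟨B, hB⟩ := (isCompact_closedBall (0 : E × U) (max R r)).exists_bound_of_continuousOn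
    hf.continuousOn
  refine ⟨max B 0, le_max_right _ _, fun a μ ha hμ => ?_⟩
  exact (hB (a, μ) (mem_closedBall_zero_iff.2 (max_le_max ha hμ))).trans (le_max_left _ _)

end BoundedSets

section Integrals

lemma le_mul_exp_of_le_add_integral {D : ℝ → ℝ} {T L c : ℝ} (hD : ContinuousOn D (Icc 0 T))
    (hL : 0 ≤ L) (hle : ∀ t ∈ Icc 0 T, D t ≤ c + ∫ s in (0 : ℝ)..t, L * D s) {t : ℝ}
    (ht : t ∈ Icc 0 T) : D t ≤ c * Real.exp (L * t) := by
  have hT : 0 ≤ T := ht.1.trans ht.2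
  let D' : ℝ → ℝ := IccExtend hT ((Icc 0 T).domRestrict D)
  have hD' : Continuous fun s => L * D' s :=
    continuous_const.mul (continuousOn_iff_continuous_domRestrict.1 hD).Icc_extend'
  have heq : ∀ s ∈ Icc 0 T, D' s = D s := fun s hs => IccExtend_of_mem hT _ hs
  let G : ℝ → ℝ := fun t => c + ∫ s in (0 : ℝ)..t, L * D' s
  have hderiv : ∀ t, HasDerivAt G (L * D' t) t := fun t =>
    (hD'.integral_hasStrictDerivAt 0 t).hasDerivAt.const_add c
  have hDG : ∀ t ∈ Icc 0 T, D t ≤ G t := fun t ht => (hle t ht).trans_eq <| by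
    refine congrArg (c + ·) (intervalIntegral.integral_congr fun s hs => ?_)
    rw [uIcc_of_le ht.1] at hs
    exact congrArg (L * ·) (heq s ⟨hs.1, hs.2.trans ht.2⟩).symm
  have hgronwall := le_gronwallBound_of_liminf_deriv_right_le (f := G) (δ := c) (K := L) (ε := 0)
    (fun t _ => (hderiv t).continuousAt.continuousWithinAt)
    (fun t _ r hr => (hderiv t).hasDerivWithinAt.liminf_right_slope_le hr) (by simp [G])
    (fun t ht => by
      rw [add_zero, heq t (Ico_subset_Icc_self ht)]
      exact mul_le_mul_of_nonneg_left (hDG t (Ico_subset_Icc_self ht)) hL) t ht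
  rw [gronwallBound_ε0, sub_zero] at hgronwall
  exact (hDG t ht).trans hgronwall

-- The integrand need not be integrable for all times, in which case the integral is `0`.
lemma aestronglyMeasurable_primitive {E : Type*} [NormedAddCommGroup E] [NormedSpace ℝ E]
    (g : ℝ → E) :
    AEStronglyMeasurable (fun t => ∫ s in (0 : ℝ)..t, g s) (volume.restrict (Ici (0 : ℝ))) := by
  let S : Set ℝ := {t | 0 ≤ t ∧ IntervalIntegrable g volume 0 t}
  have hdown : ∀ t ∈ S, Icc 0 t ⊆ S := fun t ht s hs =>
    ⟨hs.1, ht.2.mono_set (uIcc_subset_uIcc_left (Icc_subset_uIcc hs))⟩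
  have hmeas : MeasurableSet S :=
    OrdConnected.measurableSet ⟨fun a ha b hb c hc => hdown b hb ⟨ha.1.trans hc.1, hc.2⟩⟩
  have hcont : ContinuousOn (fun t => ∫ s in (0 : ℝ)..t, g s) S := by
    have hIcc : ∀ t ∈ S, ContinuousOn (fun t => ∫ s in (0 : ℝ)..t, g s) (Icc 0 t) := fun t ht => by
      simpa only [uIcc_of_le ht.1] using
        intervalIntegral.continuousOn_primitive_interval' ht.2 left_mem_uIcc
    intro t ht
    by_cases hmax : ∃ t' ∈ S, t < t'
    · obtain ⟨t', ht', hlt⟩ := hmax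
      refine ((hIcc t' ht') t ⟨ht.1, hlt.le⟩).mono_of_mem_nhdsWithin ?_
      filter_upwards [self_mem_nhdsWithin, mem_nhdsWithin_of_mem_nhds (Iio_mem_nhds hlt)]
        with s hs hs' using ⟨hs.1, le_of_lt hs'⟩
    · push Not at hmax
      exact ((hIcc t ht) t ⟨ht.1, le_rfl⟩).mono fun s hs => ⟨hs.1, hmax s hs⟩
  rw [← union_sdiff_cancel (show S ⊆ Ici (0 : ℝ) from fun t ht => ht.1),
    aestronglyMeasurable_union_iff]
  refine ⟨hcont.aestronglyMeasurable hmeas, (aestronglyMeasurable_const (b := (0 : E))).congr ?_⟩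
  filter_upwards [ae_restrict_mem (measurableSet_Ici.diff hmeas)] with t ht
  exact (intervalIntegral.integral_undef fun hi => ht.2 ⟨ht.1, hi⟩).symm

end Integrals

section Trajectories

/-- `X` solves the integral equation of `ẋ = f(x,w)` on `[0,T]`. Integrability of the right-hand
side is required because the integral of a non-integrable function is `0`. -/
def IsTraj {E U : Type*} [NormedAddCommGroup E] [NormedSpace ℝ E] (f : E → U → E) (w : ℝ → U)
    (T : ℝ) (X : ℝ → E) : Prop :=
  IntervalIntegrable (fun s => f (X s) (w s)) volume 0 T ∧
    ∀ t ∈ Icc 0 T, X t = X 0 + ∫ s in (0 : ℝ)..t, f (X s) (w s)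

namespace IsTraj

variable {E U : Type*} [NormedAddCommGroup E] [NormedSpace ℝ E] {f : E → U → E} {w w' : ℝ → U}
  {T τ L R B : ℝ} {X Y : ℝ → E} {S : Set U}

lemma continuousOn (hX : IsTraj f w T X) (hT : 0 ≤ T) : ContinuousOn X (Icc 0 T) := by
  have hprimitive := intervalIntegral.continuousOn_primitive_interval' hX.1 left_mem_uIcc
  rw [uIcc_of_le hT] at hprimitive
  exact (continuousOn_const.add hprimitive).congr hX.2

lemma mono (hX : IsTraj f w T X) (hτ : 0 ≤ τ) (hle : τ ≤ T) : IsTraj f w τ X :=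
  ⟨hX.1.mono_set (by
    rw [uIcc_of_le hτ, uIcc_of_le (hτ.trans hle)]; exact Icc_subset_Icc_right hle),
    fun t ht => hX.2 t ⟨ht.1, ht.2.trans hle⟩⟩

lemma congr_input (hX : IsTraj f w T X) (hT : 0 ≤ T) (h : ∀ s ∈ Ioo 0 T, w s = w' s) :
    IsTraj f w' T X := by
  refine ⟨hX.1.congr_uIoo fun s hs => ?_, fun t ht => ?_⟩
  · rw [uIoo_of_le hT] at hs
    simp only [h s hs]
  · rw [hX.2 t ht, intervalIntegral.integral_congr_Ioo_of_le ht.1 fun s hs => ?_]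
    simp only [h s ⟨hs.1, hs.2.trans_le ht.2⟩]

lemma intervalIntegrable (hX : IsTraj f w T X) {s t : ℝ} (hs : s ∈ Icc 0 T) (ht : t ∈ Icc 0 T) :
    IntervalIntegrable (fun q => f (X q) (w q)) volume s t :=
  (hX.mono hs.1 hs.2).1.symm.trans (hX.mono ht.1 ht.2).1

lemma sub_eq_integral (hX : IsTraj f w T X) {s t : ℝ} (hs : s ∈ Icc 0 T) (ht : t ∈ Icc 0 T) :
    X t - X s = ∫ q in s..t, f (X q) (w q) := by
  rw [hX.2 t ht, hX.2 s hs, add_sub_add_left_eq_sub,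
    intervalIntegral.integral_interval_sub_left (hX.mono ht.1 ht.2).1 (hX.mono hs.1 hs.2).1]

lemma shift (hX : IsTraj f w (τ + T) X) (hτ : 0 ≤ τ) (hT : 0 ≤ T) :
    IsTraj f (fun s => w (τ + s)) T fun s => X (τ + s) := by
  have hτT : τ ∈ Icc 0 (τ + T) := ⟨hτ, by linarith⟩
  refine ⟨?_, fun t ht => ?_⟩
  · simpa using (hX.intervalIntegrable hτT ⟨by linarith, le_rfl⟩).comp_add_left τ
  · rw [intervalIntegral.integral_comp_add_left (fun s => f (X s) (w s)) τ, add_zero,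
      ← hX.sub_eq_integral hτT ⟨by linarith [ht.1], by linarith [ht.2]⟩]
    simp only [add_zero, add_sub_cancel]

lemma norm_sub_le_mul (hX : IsTraj f w T X)
    (hB : ∀ᵐ q ∂(volume.restrict (Icc 0 T)), ‖f (X q) (w q)‖ ≤ B)
    {s t : ℝ} (hs : s ∈ Icc 0 T) (ht : t ∈ Icc 0 T) : ‖X t - X s‖ ≤ B * |t - s| := by
  rw [hX.sub_eq_integral hs ht]
  refine intervalIntegral.norm_integral_le_of_norm_le_const_ae ?_
  filter_upwards [(ae_restrict_iff' measurableSet_Icc).1 hB] with q hq hqst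
  exact hq (uIcc_subset_Icc hs ht (uIoc_subset_uIcc hqst))

lemma norm_sub_le_mul_exp (hX : IsTraj f w T X) (hY : IsTraj f w T Y) (hL : 0 ≤ L)
    (hLip : ∀ a b, ∀ μ ∈ S, ‖a‖ ≤ R → ‖b‖ ≤ R → ‖f a μ - f b μ‖ ≤ L * ‖a - b‖)
    (hXR : ∀ t ∈ Icc 0 T, ‖X t‖ ≤ R) (hYR : ∀ t ∈ Icc 0 T, ‖Y t‖ ≤ R)
    (hw : ∀ᵐ t ∂(volume.restrict (Icc 0 T)), w t ∈ S) {t : ℝ} (ht : t ∈ Icc 0 T) :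
    ‖X t - Y t‖ ≤ ‖X 0 - Y 0‖ * Real.exp (L * t) := by
  have hT : 0 ≤ T := ht.1.trans ht.2
  have hcont := ((hX.continuousOn hT).sub (hY.continuousOn hT)).norm
  refine le_mul_exp_of_le_add_integral (D := fun t => ‖X t - Y t‖) hcont hL (fun t ht => ?_) ht
  have hsplit : X t - Y t = (X 0 - Y 0) + ∫ s in (0 : ℝ)..t, (f (X s) (w s) - f (Y s) (w s)) := by
    rw [hX.2 t ht, hY.2 t ht, intervalIntegral.integral_sub (hX.mono ht.1 ht.2).1
      (hY.mono ht.1 ht.2).1]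
    abel
  rw [hsplit]
  refine (norm_add_le _ _).trans (add_le_add_right ?_ _)
  refine intervalIntegral.norm_integral_le_of_norm_le ht.1 ?_ ?_
  · filter_upwards [(ae_restrict_iff' measurableSet_Icc).1 hw] with s hs hst
    have hsT : s ∈ Icc 0 T := ⟨hst.1.le, hst.2.trans ht.2⟩
    exact hLip _ _ _ (hs hsT) (hXR s hsT) (hYR s hsT)
  · refine ((hcont.mono ?_).const_smul L).intervalIntegrable
    rw [uIcc_of_le ht.1]
    exact Icc_subset_Icc_right ht.2

lemma norm_sub_line_le [CompleteSpace E] (hX : IsTraj f w T X) (hT : 0 ≤ T) {v : E} {d : ℝ}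
    (hd : ∀ q ∈ Icc 0 T, ‖f (X q) (w q) - v‖ ≤ d) : ‖X T - (X 0 + T • v)‖ ≤ d * T := by
  have hremainder : X T - (X 0 + T • v) = ∫ q in (0 : ℝ)..T, (f (X q) (w q) - v) := by
    rw [intervalIntegral.integral_sub hX.1 intervalIntegrable_const,
      intervalIntegral.integral_const, sub_zero, hX.2 T ⟨hT, le_rfl⟩, add_sub_add_left_eq_sub]
  rw [hremainder]
  refine (intervalIntegral.norm_integral_le_of_norm_le_const fun q hq => hd q ?_).trans_eq ?_
  · exact uIcc_of_le hT ▸ uIoc_subset_uIcc hq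
  · rw [sub_zero, abs_of_nonneg hT]

lemma eq_of_initial_eq [ProperSpace E] [NormedAddCommGroup U] [ProperSpace U] {r : ℝ}
    (hX : IsTraj f w T X) (hY : IsTraj f w T Y) (hf : LocallyLipschitz (Function.uncurry f))
    (hw : ∀ᵐ t ∂(volume.restrict (Icc 0 T)), ‖w t‖ ≤ r) (h0 : X 0 = Y 0) {t : ℝ}
    (ht : t ∈ Icc 0 T) : X t = Y t := by
  have hT : 0 ≤ T := ht.1.trans ht.2
  obtain ⟨R₁, hR₁⟩ := isCompact_Icc.exists_bound_of_continuousOn (hX.continuousOn hT)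
  obtain ⟨R₂, hR₂⟩ := isCompact_Icc.exists_bound_of_continuousOn (hY.continuousOn hT)
  obtain ⟨L, hL, hLip⟩ := exists_norm_sub_le_mul_of_locallyLipschitz_uncurry hf (max R₁ R₂) r
  have hdist := hX.norm_sub_le_mul_exp (S := {μ | ‖μ‖ ≤ r}) hY hL
    (fun a b μ hμ ha hb => hLip a b μ ha hb hμ) (fun t ht => (hR₁ t ht).trans (le_max_left _ _))
    (fun t ht => (hR₂ t ht).trans (le_max_right _ _)) hw ht
  rw [h0, sub_self, norm_zero, zero_mul] at hdist
  exact sub_eq_zero.1 (norm_le_zero_iff.1 hdist)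

end IsTraj

variable {n m : ℕ} {f : EuclideanSpace ℝ (Fin n) → EuclideanSpace ℝ (Fin m) →
    EuclideanSpace ℝ (Fin n)}
  {x : ℝ → EuclideanSpace ℝ (Fin n) → (ℝ → EuclideanSpace ℝ (Fin m)) → EuclideanSpace ℝ (Fin n)}
  {u : ℝ → EuclideanSpace ℝ (Fin m)}

lemma IsSolutionMap.initial (hx : IsSolutionMap f x) (hu : IsInput u)
    (ξ : EuclideanSpace ℝ (Fin n)) : x 0 ξ u = ξ := by
  simpa using hx ξ u hu 0 self_mem_Ici

lemma BddInput.ae_norm_le_Icc (hb : BddInput u) (T : ℝ) :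
    ∀ᵐ t ∂(volume.restrict (Icc 0 T)), ‖u t‖ ≤ uNorm u :=
  ae_restrict_of_ae_restrict_of_subset Icc_subset_Ici_self hb.ae_norm_le

lemma IsBIBS.isTraj (hf : LocallyLipschitz (Function.uncurry f)) (hB : IsBIBS f x) (hu : IsInput u)
    (hb : BddInput u) (ξ : EuclideanSpace ℝ (Fin n)) {T : ℝ} (hT : 0 ≤ T) :
    IsTraj f u T fun t => x t ξ u := by
  obtain ⟨hx, σ, -, hσ⟩ := hB
  obtain ⟨B, -, hB⟩ := exists_norm_le_of_continuous_uncurry hf.continuous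
    (max (σ ‖ξ‖) (σ (uNorm u))) (uNorm u)
  have hmeas : AEStronglyMeasurable (fun s => f (x s ξ u) (u s)) (volume.restrict (Ici 0)) := by
    refine hf.continuous.comp_aestronglyMeasurable (.prodMk ?_ hu.1.aestronglyMeasurable)
    refine ((aestronglyMeasurable_primitive fun s => f (x s ξ u) (u s)).const_add ξ).congr ?_
    filter_upwards [ae_restrict_mem measurableSet_Ici] with t ht using (hx ξ u hu t ht).symm
  refine ⟨?_, fun t ht => by simpa only [hx.initial hu] using hx ξ u hu t ht.1⟩
  rw [intervalIntegrable_iff_integrableOn_Icc_of_le hT]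
  refine IntegrableOn.of_bound (by simp) (hmeas.mono_set Icc_subset_Ici_self) B ?_
  filter_upwards [ae_restrict_mem measurableSet_Icc, hb.ae_norm_le_Icc T] with t ht hut
  exact hB _ _ (hσ ξ u hu hb t ht.1) hut

lemma IsBIBS.concat (hf : LocallyLipschitz (Function.uncurry f)) (hB : IsBIBS f x) (hu : IsInput u)
    (hb : BddInput u) (ξ : EuclideanSpace ℝ (Fin n)) (μ : EuclideanSpace ℝ (Fin m)) {τ t : ℝ}
    (hτ : 0 ≤ τ) (ht : 0 ≤ t) :
    x (τ + t) ξ (concatInput μ τ u) = x t (x τ ξ fun _ => μ) u := by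
  have hw := isInput_concatInput μ τ hu hb
  have hX := hB.isTraj hf hw (bddInput_concatInput μ τ hb) ξ (add_nonneg hτ ht)
  have hstart : x τ ξ (concatInput μ τ u) = x τ ξ fun _ => μ := by
    refine ((hX.mono hτ (le_add_of_nonneg_right ht)).congr_input hτ fun s hs =>
      if_pos hs.2).eq_of_initial_eq (hB.isTraj hf (isInput_const μ) (bddInput_const μ) ξ hτ) hf
      ((bddInput_const μ).ae_norm_le_Icc τ) ?_ ⟨hτ, le_rfl⟩
    rw [hB.1.initial hw, hB.1.initial (isInput_const μ)]
  refine ((hX.shift hτ ht).congr_input ht (w' := u) fun s hs => ?_).eq_of_initial_eq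
    (hB.isTraj hf hu hb (x τ ξ fun _ => μ) ht) hf (hb.ae_norm_le_Icc t) ?_ ⟨ht, le_rfl⟩
  · simp only [concatInput, if_neg (not_lt.2 (le_add_of_nonneg_right hs.1.le)), add_sub_cancel_left]
  · rw [hB.1.initial hu, add_zero, hstart]

lemma IsBIBS.exists_norm_le (hB : IsBIBS f x) (R A : ℝ) :
    ∃ R', ∀ ξ u, ‖ξ‖ ≤ R → IsInput u → BddInput u → uNorm u ≤ A →
      ∀ t, 0 ≤ t → ‖x t ξ u‖ ≤ R' := by
  obtain ⟨σ, hσ, hbound⟩ := hB.2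
  refine ⟨max (σ (max R 0)) (σ (max A 0)), fun ξ u hξ hu hb hA t ht =>
    (hbound ξ u hu hb t ht).trans (max_le_max ?_ ?_)⟩
  · exact hσ.monotoneOn (norm_nonneg _) (mem_Ici.2 (le_max_right _ _)) (le_max_of_le_left hξ)
  · exact hσ.monotoneOn (uNorm_nonneg _) (mem_Ici.2 (le_max_right _ _)) (le_max_of_le_left hA)

lemma IsBIBS.exists_norm_const_le (hB : IsBIBS f x) (R A : ℝ) :
    ∃ R', ∀ ξ μ, ‖ξ‖ ≤ R → ‖μ‖ ≤ A → ∀ t, 0 ≤ t → ‖x t ξ fun _ => μ‖ ≤ R' := by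
  obtain ⟨R', hR'⟩ := hB.exists_norm_le R A
  exact ⟨R', fun ξ μ hξ hμ => hR' ξ _ hξ (isInput_const μ) (bddInput_const μ)
    ((uNorm_const_le μ).trans hμ)⟩

lemma IsBIBS.exists_norm_const_sub_line_le (hf : LocallyLipschitz (Function.uncurry f))
    (hB : IsBIBS f x) (R A : ℝ) :
    ∃ K, 0 ≤ K ∧ ∀ ξ ζ μ, ‖ξ‖ ≤ R → ‖ζ‖ ≤ R → ‖μ‖ ≤ A → ∀ τ, 0 ≤ τ →
      ‖x τ ζ (fun _ => μ) - (ζ + τ • f ξ μ)‖ ≤ K * (τ + ‖ζ - ξ‖) * τ := by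
  obtain ⟨R', hR'⟩ := hB.exists_norm_const_le R A
  obtain ⟨F, hF, hfF⟩ := exists_norm_le_of_continuous_uncurry hf.continuous R' A
  obtain ⟨L, hL, hfL⟩ := exists_norm_sub_le_mul_of_locallyLipschitz_uncurry hf R' A
  refine ⟨L * (F + 1), by positivity, fun ξ ζ μ hξ hζ hμ τ hτ => ?_⟩
  have hstart : ∀ η, x 0 η (fun _ => μ) = η := hB.1.initial (isInput_const μ)
  have htraj := hB.isTraj hf (isInput_const μ) (bddInput_const μ) ζ hτ
  have hξR' : ‖ξ‖ ≤ R' := hstart ξ ▸ hR' ξ μ hξ hμ 0 le_rfl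
  have hstate : ∀ q ∈ Icc 0 τ, ‖x q ζ fun _ => μ‖ ≤ R' := fun q hq => hR' ζ μ hζ hμ q hq.1
  have hnear : ∀ q ∈ Icc 0 τ, ‖x q ζ (fun _ => μ) - ζ‖ ≤ F * τ := fun q hq => by
    have hdist := htraj.norm_sub_le_mul ((ae_restrict_mem measurableSet_Icc).mono fun s hs =>
      hfF _ μ (hstate s hs) hμ) ⟨le_rfl, hτ⟩ hq
    rw [hstart, sub_zero, abs_of_nonneg hq.1] at hdist
    exact hdist.trans (by gcongr; exact hq.2)
  have hline := htraj.norm_sub_line_le hτ (v := f ξ μ) (d := L * (F * τ + ‖ζ - ξ‖)) fun q hq =>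
    (hfL _ _ μ (hstate q hq) hξR' hμ).trans (mul_le_mul_of_nonneg_left
      ((norm_sub_le_norm_sub_add_norm_sub _ ζ ξ).trans (add_le_add_left (hnear q hq) _)) hL)
  rw [hstart] at hline
  refine hline.trans (mul_le_mul_of_nonneg_right ?_ hτ)
  rw [mul_assoc]
  gcongr
  nlinarith [norm_nonneg (ζ - ξ), mul_nonneg hF (norm_nonneg (ζ - ξ))]

end Trajectories

/-! ### The largest weighted future output -/

section OutputSup

variable {n m p : ℕ}

/-- The weight of an output of norm `y` seen at time `t` under an input of gain at most `a`.
Subtracting `a` and capping at `a` make it vanish unless the transient term of the IOS estimate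
dominates `y`. The time factor increases strictly from `1` to `2`, so that shortening the
observation time strictly decreases the weight. -/
def outputWeight (y a t : ℝ) : ℝ := max 0 (min (y - a) a) * (1 + t / (1 + t))

lemma one_add_div_one_add_lt_two {t : ℝ} (ht : 0 ≤ t) : 1 + t / (1 + t) < 2 := by
  linarith [(div_lt_one (show 0 < 1 + t by linarith)).2 (lt_one_add t)]

lemma div_one_add_sq_le_sub {t τ T : ℝ} (ht : 0 ≤ t) (hτ : 0 ≤ τ) (hT : τ + t ≤ T) :
    τ / (1 + T) ^ 2 ≤ (1 + (τ + t) / (1 + (τ + t))) - (1 + t / (1 + t)) := by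
  have hincrement : (1 + (τ + t) / (1 + (τ + t))) - (1 + t / (1 + t)) =
      τ / ((1 + t) * (1 + (τ + t))) := by
    field_simp
    ring
  rw [hincrement, sq]
  gcongr <;> linarith

lemma outputWeight_nonneg {y a t : ℝ} (ht : 0 ≤ t) : 0 ≤ outputWeight y a t :=
  mul_nonneg (le_max_left _ _) (by positivity)

lemma lt_min_of_lt_outputWeight {y a t c : ℝ} (ht : 0 ≤ t) (hc : 0 ≤ c)
    (h : c < outputWeight y a t) : c / 2 < min (y - a) a := by
  have hle : outputWeight y a t ≤ max 0 (min (y - a) a) * 2 :=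
    mul_le_mul_of_nonneg_left (one_add_div_one_add_lt_two ht).le (le_max_left _ _)
  rcases lt_max_iff.1 (show c / 2 < max 0 (min (y - a) a) by linarith) with hneg | hlt
  · linarith
  · exact hlt

lemma outputWeight_le_add {y y' a t d : ℝ} (ht : 0 ≤ t) (h : y ≤ y' + d) (hd : 0 ≤ d) :
    outputWeight y a t ≤ outputWeight y' a t + 2 * d := by
  have htrunc : max 0 (min (y - a) a) ≤ max 0 (min (y' - a) a) + d := by
    refine max_le (add_nonneg (le_max_left _ _) hd) ?_
    refine (?_ : _ ≤ min (y' - a) a + d).trans (add_le_add_left (le_max_right _ _) d)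
    rw [← min_add_add_right]
    exact min_le_min (by linarith) (by linarith)
  calc outputWeight y a t ≤ (max 0 (min (y' - a) a) + d) * (1 + t / (1 + t)) :=
        mul_le_mul_of_nonneg_right htrunc (by positivity)
    _ = outputWeight y' a t + (1 + t / (1 + t)) * d := by rw [add_mul, outputWeight, mul_comm d]
    _ ≤ outputWeight y' a t + 2 * d := by gcongr; exact (one_add_div_one_add_lt_two ht).le

lemma outputWeight_add_le_of_le_min {y a b t τ T : ℝ} (hb : 0 ≤ b) (hmin : b ≤ min (y - a) a)
    (ht : 0 ≤ t) (hτ : 0 ≤ τ) (hT : τ + t ≤ T) :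
    outputWeight y a t + b * (τ / (1 + T) ^ 2) ≤ outputWeight y a (τ + t) := by
  have hgain := mul_le_mul hmin (div_one_add_sq_le_sub ht hτ hT) (by positivity) (hb.trans hmin)
  rw [outputWeight, outputWeight, max_eq_right (hb.trans hmin)]
  linarith

/-- `y` is the norm of the output at time `t` of the trajectory from `ξ` under some bounded input
whose gain is at most `a`. -/
def IsReachableOutput (h : EuclideanSpace ℝ (Fin n) → EuclideanSpace ℝ (Fin p))
    (x : ℝ → EuclideanSpace ℝ (Fin n) → (ℝ → EuclideanSpace ℝ (Fin m)) →
      EuclideanSpace ℝ (Fin n)) (g : ℝ → ℝ) (ξ : EuclideanSpace ℝ (Fin n)) (y a t : ℝ) : Prop :=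
  0 < a ∧ 0 ≤ t ∧ ∃ u, IsInput u ∧ BddInput u ∧ g (uNorm u) ≤ a ∧ y = ‖h (x t ξ u)‖

/-- The supremum of the weighted outputs reachable from `ξ`. It is a Lyapunov function for
the system which need not be smooth. -/
def outputSup (h : EuclideanSpace ℝ (Fin n) → EuclideanSpace ℝ (Fin p))
    (x : ℝ → EuclideanSpace ℝ (Fin n) → (ℝ → EuclideanSpace ℝ (Fin m)) →
      EuclideanSpace ℝ (Fin n)) (g : ℝ → ℝ) (ξ : EuclideanSpace ℝ (Fin n)) : ℝ :=
  sSup {r | ∃ y a t, IsReachableOutput h x g ξ y a t ∧ r = outputWeight y a t}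

/-- The estimate in the definition of IOS, with a given transient `β` and gain `g`. -/
def IOSEstimate (h : EuclideanSpace ℝ (Fin n) → EuclideanSpace ℝ (Fin p))
    (x : ℝ → EuclideanSpace ℝ (Fin n) → (ℝ → EuclideanSpace ℝ (Fin m)) →
      EuclideanSpace ℝ (Fin n)) (β : ℝ → ℝ → ℝ) (g : ℝ → ℝ) : Prop :=
  ∀ ξ u, IsInput u → BddInput u → ∀ t ∈ Ici (0 : ℝ),
    ‖h (x t ξ u)‖ ≤ max (β ‖ξ‖ t) (g (uNorm u))

variable {f : EuclideanSpace ℝ (Fin n) → EuclideanSpace ℝ (Fin m) → EuclideanSpace ℝ (Fin n)}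
  {h : EuclideanSpace ℝ (Fin n) → EuclideanSpace ℝ (Fin p)}
  {x : ℝ → EuclideanSpace ℝ (Fin n) → (ℝ → EuclideanSpace ℝ (Fin m)) → EuclideanSpace ℝ (Fin n)}
  {g : ℝ → ℝ} {β : ℝ → ℝ → ℝ} {ξ : EuclideanSpace ℝ (Fin n)} {y a t : ℝ}

lemma outputSup_nonneg : 0 ≤ outputSup h x g ξ :=
  Real.sSup_nonneg fun _ ⟨_, _, _, hreach, hr⟩ => hr ▸ outputWeight_nonneg hreach.2.1

lemma outputSup_le_of_forall {C : ℝ} (hC : 0 ≤ C)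
    (hle : ∀ y a t, IsReachableOutput h x g ξ y a t → outputWeight y a t ≤ C) :
    outputSup h x g ξ ≤ C :=
  Real.sSup_le (fun _ ⟨y, a, t, hreach, hr⟩ => hr ▸ hle y a t hreach) hC

namespace IsReachableOutput

lemma of_initial (hx : IsSolutionMap f x) (hg0 : g 0 = 0) (ha : 0 < a) :
    IsReachableOutput h x g ξ ‖h ξ‖ a 0 :=
  ⟨ha, le_rfl, fun _ => 0, isInput_const 0, bddInput_const 0,
    by rw [uNorm_const_zero, hg0]; exact ha.le, by rw [hx.initial (isInput_const 0)]⟩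

lemma of_concat (hf : LocallyLipschitz (Function.uncurry f)) (hB : IsBIBS f x) (hg : IsClassK g)
    {μ : EuclideanSpace ℝ (Fin m)} {τ : ℝ} (hτ : 0 ≤ τ) (hμ : g ‖μ‖ ≤ a)
    (hy : IsReachableOutput h x g (x τ ξ fun _ => μ) y a t) :
    IsReachableOutput h x g ξ y a (τ + t) := by
  obtain ⟨ha, ht, u, hu, hb, hga, rfl⟩ := hy
  refine ⟨ha, add_nonneg hτ ht, concatInput μ τ u, isInput_concatInput μ τ hu hb,
    bddInput_concatInput μ τ hb, ?_, by rw [hB.concat hf hu hb ξ μ hτ ht]⟩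
  refine (hg.monotoneOn (uNorm_nonneg _) (le_max_of_le_left (norm_nonneg μ))
    (uNorm_concatInput_le μ τ hb)).trans ?_
  rw [hg.monotoneOn.map_max (norm_nonneg μ) (uNorm_nonneg u)]
  exact max_le hμ hga

lemma lt_transient (hy : IsReachableOutput h x g ξ y a t) (hβ : IsClassKL β)
    (hest : IOSEstimate h x β g) {R c : ℝ} (hξ : ‖ξ‖ ≤ R) (hc : 0 ≤ c)
    (hlt : c < outputWeight y a t) : c / 2 + a < β R t := by
  obtain ⟨-, ht, u, hu, hb, hga, rfl⟩ := hy
  have hexcess := (lt_min_of_lt_outputWeight ht hc hlt).trans_le (min_le_left _ _)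
  have hmono : β ‖ξ‖ t ≤ β R t :=
    (hβ.1 t ht).monotoneOn (norm_nonneg _) ((norm_nonneg ξ).trans hξ) hξ
  rcases le_max_iff.1 (hest ξ u hu hb t ht) with htrans | hgain <;> linarith

lemma outputWeight_le (hy : IsReachableOutput h x g ξ y a t) (hβ : IsClassKL β)
    (hest : IOSEstimate h x β g) : outputWeight y a t ≤ 2 * β ‖ξ‖ 0 := by
  have hβ0 : 0 ≤ β ‖ξ‖ 0 := (hβ.1 0 self_mem_Ici).nonneg (norm_nonneg _)
  by_contra! hlt
  have htrans := hy.lt_transient hβ hest le_rfl (by linarith) hlt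
  have hanti : β ‖ξ‖ t ≤ β ‖ξ‖ 0 := (hβ.2 ‖ξ‖ (norm_nonneg _)).1 self_mem_Ici hy.2.1 hy.2.1
  linarith [hy.1]

lemma outputWeight_le_outputSup (hy : IsReachableOutput h x g ξ y a t) (hβ : IsClassKL β)
    (hest : IOSEstimate h x β g) : outputWeight y a t ≤ outputSup h x g ξ :=
  le_csSup ⟨2 * β ‖ξ‖ 0, fun _ ⟨_, _, _, hreach, hr⟩ => hr ▸ hreach.outputWeight_le hβ hest⟩
    ⟨y, a, t, hy, rfl⟩

end IsReachableOutput

lemma outputSup_le (hβ : IsClassKL β) (hest : IOSEstimate h x β g) :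
    outputSup h x g ξ ≤ 2 * β ‖ξ‖ 0 :=
  outputSup_le_of_forall (mul_nonneg zero_le_two ((hβ.1 0 self_mem_Ici).nonneg (norm_nonneg _)))
    fun _ _ _ hy => hy.outputWeight_le hβ hest

lemma norm_output_div_two_le_outputSup (hx : IsSolutionMap f x) (hg0 : g 0 = 0) (hβ : IsClassKL β)
    (hest : IOSEstimate h x β g) : ‖h ξ‖ / 2 ≤ outputSup h x g ξ := by
  rcases (norm_nonneg (h ξ)).eq_or_lt with hzero | hpos
  · rw [← hzero, zero_div]
    exact outputSup_nonneg
  · have hle := (IsReachableOutput.of_initial (h := h) (ξ := ξ) hx hg0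
      (half_pos hpos)).outputWeight_le_outputSup hβ hest
    rw [outputWeight, sub_half, min_self, zero_div, add_zero, mul_one] at hle
    exact (le_max_right _ _).trans hle

lemma IsClassKL.exists_forall_lt (hβ : IsClassKL β) {R c : ℝ} (hR : 0 ≤ R) (hc : 0 < c) :
    ∃ T, 0 ≤ T ∧ ∀ t, T ≤ t → β R t < c := by
  obtain ⟨T, hT⟩ := eventually_atTop.1 ((hβ.2 R hR).2.eventually_lt_const hc)
  exact ⟨max T 0, le_max_right _ _, fun t ht => hT t ((le_max_left _ _).trans ht)⟩

lemma IsBIBS.exists_norm_output_sub_le (hf : LocallyLipschitz (Function.uncurry f))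
    (hh : LocallyLipschitz h) (hB : IsBIBS f x) (R A T : ℝ) :
    ∃ L, 0 ≤ L ∧ ∀ ξ ζ u t, ‖ξ‖ ≤ R → ‖ζ‖ ≤ R → IsInput u → BddInput u → uNorm u ≤ A →
      t ∈ Icc 0 T → ‖h (x t ξ u) - h (x t ζ u)‖ ≤ L * ‖ξ - ζ‖ := by
  obtain ⟨R', hR'⟩ := hB.exists_norm_le R A
  obtain ⟨Lf, hLf, hfLip⟩ := exists_norm_sub_le_mul_of_locallyLipschitz_uncurry hf R' A
  obtain ⟨Lh, hLh, hhLip⟩ := exists_norm_sub_le_mul_of_locallyLipschitz hh R'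
  refine ⟨Lh * Real.exp (Lf * T), by positivity, fun ξ ζ u t hξ hζ hu hb hA ht => ?_⟩
  have hξR' := hR' ξ u hξ hu hb hA
  have hζR' := hR' ζ u hζ hu hb hA
  have hdist := (hB.isTraj hf hu hb ξ ht.1).norm_sub_le_mul_exp (hB.isTraj hf hu hb ζ ht.1)
    (S := {μ | ‖μ‖ ≤ A}) hLf (fun a b μ hμ ha hb => hfLip a b μ ha hb hμ) (fun s hs => hξR' s hs.1)
    (fun s hs => hζR' s hs.1) ((hb.ae_norm_le_Icc t).mono fun s hs => hs.trans hA) ⟨ht.1, le_rfl⟩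
  simp only [hB.1.initial hu] at hdist
  calc ‖h (x t ξ u) - h (x t ζ u)‖ ≤ Lh * ‖x t ξ u - x t ζ u‖ :=
        hhLip _ _ (hξR' t ht.1) (hζR' t ht.1)
    _ ≤ Lh * (‖ξ - ζ‖ * Real.exp (Lf * T)) := by
        gcongr
        exact hdist.trans (by gcongr; exact ht.2)
    _ = Lh * Real.exp (Lf * T) * ‖ξ - ζ‖ := by ring

lemma exists_outputSup_le_max_add_mul (hf : LocallyLipschitz (Function.uncurry f))
    (hh : LocallyLipschitz h) (hB : IsBIBS f x) (hgid : ∀ s, 0 ≤ s → s ≤ g s) (hβ : IsClassKL β)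
    (hest : IOSEstimate h x β g) {R c : ℝ} (hR : 0 ≤ R) (hc : 0 < c) :
    ∃ L, 0 ≤ L ∧ ∀ ξ ζ, ‖ξ‖ ≤ R → ‖ζ‖ ≤ R →
      outputSup h x g ξ ≤ max (outputSup h x g ζ) c + L * ‖ξ - ζ‖ := by
  obtain ⟨T, -, hT⟩ := hβ.exists_forall_lt hR (half_pos hc)
  obtain ⟨L, hL, hLip⟩ := hB.exists_norm_output_sub_le hf hh R (β R 0) T
  refine ⟨2 * L, by positivity, fun ξ ζ hξ hζ =>
    outputSup_le_of_forall (by positivity) fun y a t hy => ?_⟩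
  rcases le_or_gt (outputWeight y a t) c with hsmall | hlarge
  · exact hsmall.trans ((le_max_right _ _).trans (le_add_of_nonneg_right (by positivity)))
  have htrans := hy.lt_transient hβ hest hξ hc.le hlarge
  obtain ⟨ha, ht, u, hu, hb, hga, rfl⟩ := hy
  have htT : t ≤ T := by
    by_contra! hlt
    linarith [hT t hlt.le]
  have hanti : β R t ≤ β R 0 := (hβ.2 R hR).1 self_mem_Ici ht ht
  have hnear := hLip ξ ζ u t hξ hζ hu hb (by linarith [hgid _ (uNorm_nonneg u)]) ⟨ht, htT⟩
  have hadd := outputWeight_le_add (a := a) ht (sub_le_iff_le_add'.1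
    ((norm_sub_norm_le _ _).trans hnear)) (by positivity)
  have hζle : outputWeight ‖h (x t ζ u)‖ a t ≤ outputSup h x g ζ :=
    IsReachableOutput.outputWeight_le_outputSup ⟨ha, ht, u, hu, hb, hga, rfl⟩ hβ hest
  linarith [le_max_left (outputSup h x g ζ) c]

lemma locallyLipschitz_max_outputSup (hf : LocallyLipschitz (Function.uncurry f))
    (hh : LocallyLipschitz h) (hB : IsBIBS f x) (hgid : ∀ s, 0 ≤ s → s ≤ g s) (hβ : IsClassKL β)
    (hest : IOSEstimate h x β g) {c : ℝ} (hc : 0 < c) :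
    LocallyLipschitz fun ξ => max (outputSup h x g ξ) c := fun ξ₀ => by
  obtain ⟨L, hL, hLip⟩ := exists_outputSup_le_max_add_mul hf hh hB hgid hβ hest
    (R := ‖ξ₀‖ + 1) (by positivity) hc
  refine ⟨⟨L, hL⟩, Metric.closedBall 0 (‖ξ₀‖ + 1), Metric.closedBall_mem_nhds_of_mem
    (by simp), LipschitzOnWith.of_le_add_mul _ fun ξ hξ ζ hζ => ?_⟩
  rw [mem_closedBall_zero_iff] at hξ hζ
  rw [dist_eq_norm]
  exact max_le (hLip ξ ζ hξ hζ) (le_add_of_le_of_nonneg (le_max_right _ _) (by positivity))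

/-- Where `V ≥ c`, the function `V` decreases at a locally uniform rate under constant inputs whose
gain is at most `V / 4`. -/
def DecaysAbove (x : ℝ → EuclideanSpace ℝ (Fin n) → (ℝ → EuclideanSpace ℝ (Fin m)) →
    EuclideanSpace ℝ (Fin n)) (g : ℝ → ℝ) (V : EuclideanSpace ℝ (Fin n) → ℝ) (c : ℝ) : Prop :=
  ∀ R, 0 ≤ R → ∃ δ, 0 < δ ∧ ∀ ζ μ, ‖ζ‖ ≤ R → c ≤ V ζ → g ‖μ‖ ≤ V ζ / 4 →
    ∀ τ ∈ Icc (0 : ℝ) 1, V (x τ ζ fun _ => μ) ≤ V ζ - δ * τ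

lemma decaysAbove_outputSup (hf : LocallyLipschitz (Function.uncurry f)) (hB : IsBIBS f x)
    (hg : IsClassK g) (hβ : IsClassKL β) (hest : IOSEstimate h x β g) {c : ℝ} (hc : 0 < c) :
    DecaysAbove x g (outputSup h x g) c := fun R hR => by
  obtain ⟨T, hT, htransient⟩ := hβ.exists_forall_lt hR (show 0 < 3 * c / 8 by positivity)
  let δ := min (c / 4) (3 * c / 8 / (1 + T) ^ 2)
  refine ⟨δ, by positivity, fun ζ μ hζ hcζ hμ τ hτ => ?_⟩
  set v := outputSup h x g ζ
  have hδc : δ * τ ≤ c / 4 * 1 := mul_le_mul (min_le_left _ _) hτ.2 hτ.1 (by positivity)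
  have hδT : δ * τ ≤ 3 * c / 8 * (τ / (1 + T) ^ 2) :=
    (mul_le_mul_of_nonneg_right (min_le_right _ _) hτ.1).trans_eq (by ring)
  refine outputSup_le_of_forall (by linarith) fun y a t hy => ?_
  rcases le_or_gt (outputWeight y a t) (3 * v / 4) with hsmall | hlarge
  · linarith
  have hmin := lt_min_of_lt_outputWeight hy.2.1 (by linarith) hlarge
  have hreach : IsReachableOutput h x g ζ y a (τ + t) :=
    hy.of_concat hf hB hg hτ.1 (by linarith [min_le_right (y - a) a])
  have hincr := outputWeight_add_le_of_le_min le_rfl (show 0 ≤ min (y - a) a by linarith) hy.2.1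
    hτ.1 le_rfl
  have hlate := hreach.lt_transient hβ hest hζ (show 0 ≤ 3 * v / 4 by linarith) (by linarith)
  have htT : τ + t ≤ T := by
    by_contra! hlt
    linarith [htransient _ hlt.le, hy.1]
  have hgain := outputWeight_add_le_of_le_min (y := y) (a := a) (b := 3 * c / 8) (by positivity)
    (by linarith) hy.2.1 hτ.1 htT
  linarith [hreach.outputWeight_le_outputSup hβ hest]

end OutputSup

/-! ### Smooth approximation along the vector field -/

section Smoothing

variable {n m : ℕ}
  {f : EuclideanSpace ℝ (Fin n) → EuclideanSpace ℝ (Fin m) → EuclideanSpace ℝ (Fin n)}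
  {x : ℝ → EuclideanSpace ℝ (Fin n) → (ℝ → EuclideanSpace ℝ (Fin m)) → EuclideanSpace ℝ (Fin n)}
  {V : EuclideanSpace ℝ (Fin n) → ℝ} {g : ℝ → ℝ} {c : ℝ}

lemma exists_le_of_continuous_max (hV : Continuous fun ξ => max (V ξ) c) (R : ℝ) :
    ∃ W, ∀ ξ, ‖ξ‖ ≤ R → V ξ ≤ W := by
  obtain ⟨W, hW⟩ := ((isCompact_closedBall 0 R).image hV).bddAbove
  exact ⟨W, fun ξ hξ => (le_max_left _ _).trans
    (hW (mem_image_of_mem _ (mem_closedBall_zero_iff.2 hξ)))⟩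

lemma norm_le_of_eight_mul_le {μ : EuclideanSpace ℝ (Fin m)} {r : ℝ}
    (hgid : ∀ s, 0 ≤ s → s ≤ g s) (hμ : 8 * g ‖μ‖ ≤ r) : ‖μ‖ ≤ r := by
  linarith [hgid ‖μ‖ (norm_nonneg μ), norm_nonneg μ]

lemma three_div_four_mul_le_of_max_sub_max_le {a b : ℝ} (hc : 0 < c) (ha : 2 * c ≤ a)
    (hab : max a c - max b c ≤ c / 2) : 3 / 4 * a ≤ b := by
  rw [max_eq_left (by linarith)] at hab
  rcases le_total b c with hbc | hbc
  · rw [max_eq_right hbc] at hab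
    linarith
  · rw [max_eq_left hbc] at hab
    linarith

lemma IsBIBS.exists_comp_line_le (hf : LocallyLipschitz (Function.uncurry f)) (hB : IsBIBS f x)
    {Q : EuclideanSpace ℝ (Fin n) → ℝ} (hQ : LocallyLipschitz Q) (R A : ℝ) :
    ∃ L, 0 ≤ L ∧ ∀ ξ ζ μ, ‖ξ‖ ≤ R → ‖ζ‖ ≤ R → ‖μ‖ ≤ A → ∀ τ ∈ Icc (0 : ℝ) 1,
      Q (ζ + τ • f ξ μ) ≤ Q (x τ ζ fun _ => μ) + L * (τ + ‖ζ - ξ‖) * τ := by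
  obtain ⟨R', hR'⟩ := hB.exists_norm_const_le R A
  obtain ⟨K, hK, hline⟩ := hB.exists_norm_const_sub_line_le hf R A
  let R'' := R' + K * (1 + 2 * R)
  obtain ⟨L, hL, hLip⟩ := exists_norm_sub_le_mul_of_locallyLipschitz hQ R''
  refine ⟨L * K, by positivity, fun ξ ζ μ hξ hζ hμ τ hτ => ?_⟩
  have hτ0 := hτ.1
  have hR : 0 ≤ R := (norm_nonneg ξ).trans hξ
  have herror := hline ξ ζ μ hξ hζ hμ τ hτ0
  have hflow := hR' ζ μ hζ hμ τ hτ0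
  have hclose : K * (τ + ‖ζ - ξ‖) * τ ≤ K * (1 + 2 * R) * 1 := by
    gcongr
    exacts [hτ.2, by linarith [norm_sub_le ζ ξ], hτ.2]
  have hend : ‖ζ + τ • f ξ μ‖ ≤ R'' := by
    linarith [norm_le_norm_add_norm_sub (x τ ζ fun _ => μ) (ζ + τ • f ξ μ)]
  have hdiff := (neg_le_abs _).trans
    (hLip _ _ (hflow.trans (le_add_of_nonneg_right (by positivity))) hend)
  linarith [mul_le_mul_of_nonneg_left herror hL]

lemma DecaysAbove.hasUniformDescent (hf : LocallyLipschitz (Function.uncurry f))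
    (hB : IsBIBS f x) (hgid : ∀ s, 0 ≤ s → s ≤ g s)
    (hV : LocallyLipschitz fun ξ => max (V ξ) c) (hc : 0 < c) (hdec : DecaysAbove x g V c) :
    HasUniformDescent (fun ξ => max (V ξ) c)
      fun ξ => f ξ '' {μ | 2 * c ≤ V ξ ∧ 8 * g ‖μ‖ ≤ V ξ} := fun R => by
  obtain ⟨W, hW⟩ := exists_le_of_continuous_max hV.continuous R
  obtain ⟨L, hL, hLip⟩ := exists_norm_sub_le_mul_of_locallyLipschitz hV (R + 1)
  obtain ⟨K, hK, hline⟩ := hB.exists_comp_line_le hf hV (max R 0 + 1) W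
  obtain ⟨δ, hδ, hdecay⟩ := hdec (max R 0 + 1) (by positivity)
  obtain ⟨η, hη, hη1, hηsmall⟩ := exists_pos_le_mul_le (show 0 < min (c / 2) (δ / 4) by positivity)
    one_pos (δ + L + K)
  obtain ⟨hηc, hηδ⟩ := le_min_iff.1 hηsmall
  have hLη : 0 ≤ η * L := by positivity
  have hKη : 0 ≤ η * K := by positivity
  have hδη : 0 < η * δ := by positivity
  refine ⟨δ / 2, half_pos hδ, η, hη, η, hη, ?_⟩
  rintro ξ hξ _ ⟨μ, ⟨hcξ, hμ⟩, rfl⟩ ζ hζ τ ⟨hτ, hτη⟩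
  rw [mem_closedBall_iff_norm] at hζ
  have hRR : R ≤ max R 0 := le_max_left R 0
  have hζR : ‖ζ‖ ≤ R + 1 := by linarith [norm_le_norm_add_norm_sub' ζ ξ]
  have hμW : ‖μ‖ ≤ W := norm_le_of_eight_mul_le hgid (hμ.trans (hW ξ hξ))
  have hVζ : 3 / 4 * V ξ ≤ V ζ := by
    refine three_div_four_mul_le_of_max_sub_max_le hc hcξ ?_
    have hdiff := (le_abs_self _).trans (hLip ξ ζ (by linarith) hζR)
    linarith [mul_le_mul_of_nonneg_left ((norm_sub_rev ξ ζ).trans_le hζ) hL]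
  have hflow : max (V (x τ ζ fun _ => μ)) c ≤ V ζ - δ * τ := by
    refine max_le (hdecay ζ μ (by linarith) (by linarith) (by linarith) τ
      ⟨hτ.le, by linarith⟩) ?_
    linarith [mul_le_mul_of_nonneg_left hτη.le hδ.le]
  have herror : K * (τ + ‖ζ - ξ‖) * τ ≤ δ / 2 * τ :=
    mul_le_mul_of_nonneg_right
      (by linarith [mul_le_mul_of_nonneg_left (add_le_add hτη.le hζ) hK]) hτ.le
  linarith [hline ξ ζ μ (by linarith) (by linarith) hμW τ ⟨hτ.le, by linarith⟩,
    le_max_left (V ζ) c]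

lemma DecaysAbove.exists_contDiff_approx (hf : LocallyLipschitz (Function.uncurry f))
    (hB : IsBIBS f x) (hgid : ∀ s, 0 ≤ s → s ≤ g s)
    (hV : LocallyLipschitz fun ξ => max (V ξ) c) (hc : 0 < c) (hdec : DecaysAbove x g V c) :
    ∃ M : EuclideanSpace ℝ (Fin n) → ℝ, ContDiff ℝ (⊤ : ℕ∞) M ∧
      (∀ ξ, |M ξ - max (V ξ) c| ≤ c) ∧
      ∀ ξ μ, 2 * c ≤ V ξ → 8 * g ‖μ‖ ≤ V ξ → fderiv ℝ M ξ (f ξ μ) < 0 := by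
  have hbound : ∀ R : ℝ, ∃ B, ∀ ξ, ‖ξ‖ ≤ R →
      ∀ v ∈ f ξ '' {μ | 2 * c ≤ V ξ ∧ 8 * g ‖μ‖ ≤ V ξ}, ‖v‖ ≤ B := fun R => by
    obtain ⟨W, hW⟩ := exists_le_of_continuous_max hV.continuous R
    obtain ⟨B, -, hfB⟩ := exists_norm_le_of_continuous_uncurry hf.continuous R W
    refine ⟨B, ?_⟩
    rintro ξ hξ _ ⟨μ, ⟨-, hμ⟩, rfl⟩
    exact hfB ξ μ hξ (norm_le_of_eight_mul_le hgid (hμ.trans (hW ξ hξ)))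
  obtain ⟨M, hM, happrox, hdescent⟩ :=
    (hdec.hasUniformDescent hf hB hgid hV hc).exists_contDiff_approx hV.continuous hbound hc
  exact ⟨M, hM, happrox, fun ξ μ hξ hμ => hdescent ξ _ (mem_image_of_mem _ ⟨hξ, hμ⟩)⟩

end Smoothing

/-! ### A smooth ramp -/

/-- A smooth nondecreasing unbounded function which vanishes exactly on `(-∞, 0]`. -/
def smoothRamp (s : ℝ) : ℝ := s * expNegInvGlue s

section SmoothRamp

variable {s : ℝ}

lemma contDiff_smoothRamp : ContDiff ℝ (⊤ : ℕ∞) smoothRamp :=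
  contDiff_id.mul expNegInvGlue.contDiff

lemma smoothRamp_of_nonpos (hs : s ≤ 0) : smoothRamp s = 0 := by
  rw [smoothRamp, expNegInvGlue.zero_of_nonpos hs, mul_zero]

lemma smoothRamp_of_pos (hs : 0 < s) : smoothRamp s = s * Real.exp (-s⁻¹) := by
  rw [smoothRamp, expNegInvGlue, if_neg hs.not_ge]

lemma smoothRamp_pos (hs : 0 < s) : 0 < smoothRamp s :=
  mul_pos hs (expNegInvGlue.pos_of_pos hs)

lemma smoothRamp_nonneg (s : ℝ) : 0 ≤ smoothRamp s :=
  (le_or_gt s 0).elim (fun hs => (smoothRamp_of_nonpos hs).ge) fun hs => (smoothRamp_pos hs).le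

lemma smoothRamp_le (hs : 0 ≤ s) : smoothRamp s ≤ s := by
  rcases hs.eq_or_lt with rfl | hpos
  · exact (smoothRamp_of_nonpos le_rfl).le
  · rw [smoothRamp_of_pos hpos]
    exact mul_le_of_le_one_right hs (Real.exp_le_one_iff.2 (neg_nonpos.2 (inv_nonneg.2 hs)))

lemma deriv_smoothRamp_of_nonpos (hs : s ≤ 0) : deriv smoothRamp s = 0 :=
  IsLocalMin.deriv_eq_zero (Eventually.of_forall fun t =>
    (smoothRamp_of_nonpos hs).trans_le (smoothRamp_nonneg t))

lemma deriv_smoothRamp_pos (hs : 0 < s) : 0 < deriv smoothRamp s := by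
  have hlocal : smoothRamp =ᶠ[𝓝 s] fun t => t * Real.exp (-t⁻¹) := by
    filter_upwards [lt_mem_nhds hs] with t ht using smoothRamp_of_pos ht
  have hderiv : deriv smoothRamp s = _ :=
    hlocal.deriv_eq.trans ((hasDerivAt_id s).mul (hasDerivAt_inv hs.ne').neg.exp).deriv
  rw [hderiv]
  simp only [id, neg_neg]
  positivity

lemma monotone_smoothRamp : Monotone smoothRamp :=
  monotone_of_deriv_nonneg (contDiff_smoothRamp.differentiable (by simp)) fun s =>
    (le_or_gt s 0).elim (fun hs => (deriv_smoothRamp_of_nonpos hs).ge)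
      fun hs => (deriv_smoothRamp_pos hs).le

lemma tendsto_smoothRamp_atTop : Tendsto smoothRamp atTop atTop := by
  refine tendsto_atTop_mono' _ ?_ (tendsto_id.atTop_mul_const (Real.exp_pos (-1)))
  filter_upwards [eventually_ge_atTop (1 : ℝ)] with s hs
  have hs0 : 0 < s := zero_lt_one.trans_le hs
  rw [smoothRamp_of_pos hs0]
  exact mul_le_mul_of_nonneg_left
    (Real.exp_le_exp.2 (neg_le_neg (inv_le_one_of_one_le₀ hs))) hs0.le

end SmoothRamp

/-! ### Assembling approximations on all scales -/

section RampSeries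

/-- The superposition, with small weights `a k`, of ramps above the threshold `3 / 2 ^ k` applied
to functions `M k`. It vanishes only where every `M k` is below its threshold, and each `M k`
contributes to its derivative only above the threshold. -/
def rampSeries {E : Type*} (a : ℕ → ℝ) (M : ℕ → E → ℝ) (ξ : E) : ℝ :=
  ∑' k, a k * smoothRamp (M k ξ - 3 * (1 / 2) ^ k)

lemma two_mul_le_of_abs_sub_max_le {y v c : ℝ} (h : |y - max v c| ≤ c) (hy : 0 < y - 3 * c) :
    2 * c ≤ v := by
  have hc : 0 ≤ c := (abs_nonneg _).trans h
  have hyc := (abs_le.1 h).2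
  rcases max_choice v c with hmax | hmax <;> rw [hmax] at hyc <;> linarith

lemma smoothRamp_sub_mem_Icc_of_abs_sub_max_le {y v c : ℝ} (hv : 0 ≤ v)
    (h : |y - max v c| ≤ c) : smoothRamp (y - 3 * c) ∈ Icc 0 v := by
  refine ⟨smoothRamp_nonneg _, ?_⟩
  rcases le_or_gt (y - 3 * c) 0 with hy | hy
  · exact (smoothRamp_of_nonpos hy).trans_le hv
  · have hc : 0 ≤ c := (abs_nonneg _).trans h
    have hvc := two_mul_le_of_abs_sub_max_le h hy
    have hyc := (abs_le.1 h).2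
    rw [max_eq_left (by linarith)] at hyc
    exact (smoothRamp_le hy.le).trans (by linarith)

variable {a b : ℕ → ℝ} {w : ℝ}

lemma mul_le_geometric_of_le (ha : ∀ k, 0 < a k ∧ a k ≤ 1 / 2 / 2 ^ k)
    (hb : ∀ k, b k ∈ Icc 0 w) (k : ℕ) : a k * b k ≤ w / 2 / 2 ^ k :=
  calc a k * b k ≤ 1 / 2 / 2 ^ k * w :=
        mul_le_mul (ha k).2 (hb k).2 (hb k).1 (by positivity)
    _ = w / 2 / 2 ^ k := by ring

lemma summable_mul_of_le_geometric (ha : ∀ k, 0 < a k ∧ a k ≤ 1 / 2 / 2 ^ k)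
    (hb : ∀ k, b k ∈ Icc 0 w) : Summable fun k => a k * b k :=
  Summable.of_nonneg_of_le (fun k => mul_nonneg (ha k).1.le (hb k).1)
    (mul_le_geometric_of_le ha hb) (hasSum_geometric_two' w).summable

lemma summable_mul_smoothRamp_sub (ha : ∀ k, 0 < a k ∧ a k ≤ 1 / 2 / 2 ^ k) (s : ℝ) :
    Summable fun k => a k * smoothRamp (s / 2 - 4 * (1 / 2) ^ k) := by
  refine summable_mul_of_le_geometric (w := |s|) ha fun k => ⟨smoothRamp_nonneg _, ?_⟩
  have hle : s / 2 - 4 * (1 / 2) ^ k ≤ |s| := by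
    have hpow : (0 : ℝ) < (1 / 2) ^ k := by positivity
    linarith [le_abs_self s, abs_nonneg s]
  exact (monotone_smoothRamp hle).trans (smoothRamp_le (abs_nonneg s))

lemma exists_isClassKInfty_le_tsum_smoothRamp (ha : ∀ k, 0 < a k ∧ a k ≤ 1 / 2 / 2 ^ k) :
    ∃ α, IsClassKInfty α ∧ ∀ s, 0 ≤ s →
      α s ≤ ∑' k, a k * smoothRamp (s / 2 - 4 * (1 / 2) ^ k) := by
  let m : ℝ → ℝ := fun s => ∑' k, a k * smoothRamp (s / 2 - 4 * (1 / 2) ^ k)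
  have hsum := summable_mul_smoothRamp_sub ha
  have hnonneg : ∀ s k, 0 ≤ a k * smoothRamp (s / 2 - 4 * (1 / 2) ^ k) := fun s k =>
    mul_nonneg (ha k).1.le (smoothRamp_nonneg _)
  have hmono : Monotone m := fun s t hst => (hsum s).tsum_le_tsum
    (fun k => mul_le_mul_of_nonneg_left (monotone_smoothRamp (by linarith)) (ha k).1.le) (hsum t)
  have hpos : ∀ s, 0 < s → 0 < m s := fun s hs => by
    obtain ⟨k, hk⟩ := exists_pow_lt_of_lt_one (show 0 < s / 8 by positivity)
      (show (1 / 2 : ℝ) < 1 by norm_num)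
    exact (hsum s).tsum_pos (hnonneg s) k (mul_pos (ha k).1 (smoothRamp_pos (by linarith)))
  have htop : Tendsto m atTop atTop := by
    refine tendsto_atTop_mono (fun s => (hsum s).le_tsum 0 fun k _ => hnonneg s k) ?_
    refine Tendsto.const_mul_atTop (ha 0).1 (tendsto_smoothRamp_atTop.comp ?_)
    exact tendsto_atTop_add_const_right _ _ (tendsto_id.atTop_div_const two_pos)
  have hzero : 0 ≤ m 0 := tsum_nonneg (hnonneg 0)
  exact ⟨classKMinorant m, ⟨isClassK_classKMinorant hmono hpos,
    tendsto_classKMinorant hmono hzero htop⟩, fun s hs => classKMinorant_le hmono hzero hs⟩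

variable {E : Type*} {M : ℕ → E → ℝ} {V : E → ℝ} {ξ : E}

lemma rampSeries_nonneg (ha : ∀ k, 0 < a k) : 0 ≤ rampSeries a M ξ :=
  tsum_nonneg fun k => mul_nonneg (ha k).le (smoothRamp_nonneg _)

lemma exists_threshold_lt_of_rampSeries_pos (hξ : 0 < rampSeries a M ξ) :
    ∃ k, 0 < M k ξ - 3 * (1 / 2) ^ k := by
  by_contra! hall
  refine hξ.ne' ?_
  simp only [rampSeries, smoothRamp_of_nonpos (hall _), mul_zero, tsum_zero]

lemma rampSeries_le (ha : ∀ k, 0 < a k ∧ a k ≤ 1 / 2 / 2 ^ k) (hV : 0 ≤ V ξ)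
    (hM : ∀ k, |M k ξ - max (V ξ) ((1 / 2) ^ k)| ≤ (1 / 2) ^ k) : rampSeries a M ξ ≤ V ξ :=
  have hterm k := smoothRamp_sub_mem_Icc_of_abs_sub_max_le hV (hM k)
  hasSum_le (mul_le_geometric_of_le ha hterm) (summable_mul_of_le_geometric ha hterm).hasSum
    (hasSum_geometric_two' (V ξ))

lemma tsum_smoothRamp_le_rampSeries (ha : ∀ k, 0 < a k ∧ a k ≤ 1 / 2 / 2 ^ k) (hV : 0 ≤ V ξ)
    (hM : ∀ k, |M k ξ - max (V ξ) ((1 / 2) ^ k)| ≤ (1 / 2) ^ k) {s : ℝ} (hs : s / 2 ≤ V ξ) :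
    ∑' k, a k * smoothRamp (s / 2 - 4 * (1 / 2) ^ k) ≤ rampSeries a M ξ := by
  have hterm k := smoothRamp_sub_mem_Icc_of_abs_sub_max_le hV (hM k)
  refine (summable_mul_smoothRamp_sub ha s).tsum_le_tsum (fun k => ?_)
    (summable_mul_of_le_geometric ha hterm)
  refine mul_le_mul_of_nonneg_left (monotone_smoothRamp ?_) (ha k).1.le
  linarith [(abs_le.1 (hM k)).1, le_max_left (V ξ) ((1 / 2) ^ k)]

variable [NormedAddCommGroup E] [NormedSpace ℝ E] {v : E}

lemma fderiv_smoothRamp_sub_apply {y : E → ℝ} (hy : DifferentiableAt ℝ y ξ) (c : ℝ) :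
    fderiv ℝ (fun ζ => smoothRamp (y ζ - c)) ξ v =
      deriv smoothRamp (y ξ - c) * fderiv ℝ y ξ v := by
  have hramp := (contDiff_smoothRamp.differentiable (by simp) (y ξ - c)).hasDerivAt
  have hcomp : HasFDerivAt (fun ζ => smoothRamp (y ζ - c))
      (deriv smoothRamp (y ξ - c) • fderiv ℝ y ξ) ξ :=
    (hramp.comp_hasFDerivAt ξ (hy.hasFDerivAt.sub_const c) :)
  rw [hcomp.fderiv, smul_apply, smul_eq_mul]

lemma hasSum_fderiv_rampSeries
    (hs : HasLocallySummableDerivs fun k ζ => a k • smoothRamp (M k ζ - 3 * (1 / 2) ^ k))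
    (hM : ∀ k, ContDiff ℝ (⊤ : ℕ∞) (M k)) (ξ v : E) :
    HasSum (fun k => a k * (deriv smoothRamp (M k ξ - 3 * (1 / 2) ^ k) * fderiv ℝ (M k) ξ v))
      (fderiv ℝ (rampSeries a M) ξ v) := by
  have hdiff : ∀ k, Differentiable ℝ (M k) := fun k => (hM k).differentiable (by simp)
  have hramp : ∀ k, Differentiable ℝ fun ζ => smoothRamp (M k ζ - 3 * (1 / 2) ^ k) := fun k =>
    (contDiff_smoothRamp.differentiable (by simp)).comp ((hdiff k).sub_const _)
  have hderiv : fderiv ℝ (rampSeries a M) ξ = _ :=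
    (hs.hasFDerivAt_tsum (fun k => (hramp k).const_smul (a k)) ξ).fderiv
  rw [hderiv]
  refine ((hs.summable_fderiv ξ).hasSum.mapL (ContinuousLinearMap.apply ℝ ℝ v)).congr_fun
    fun k => ?_
  rw [ContinuousLinearMap.apply_apply, fderiv_fun_const_smul (hramp k ξ), smul_apply,
    fderiv_smoothRamp_sub_apply (hdiff k ξ), smul_eq_mul]

lemma fderiv_rampSeries_neg (ha : ∀ k, 0 < a k)
    (hs : HasLocallySummableDerivs fun k ζ => a k • smoothRamp (M k ζ - 3 * (1 / 2) ^ k))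
    (hM : ∀ k, ContDiff ℝ (⊤ : ℕ∞) (M k)) (hξ : 0 < rampSeries a M ξ)
    (hneg : ∀ k, 0 < M k ξ - 3 * (1 / 2) ^ k → fderiv ℝ (M k) ξ v < 0) :
    fderiv ℝ (rampSeries a M) ξ v < 0 := by
  have hterm : ∀ k, 0 < M k ξ - 3 * (1 / 2) ^ k →
      a k * (deriv smoothRamp (M k ξ - 3 * (1 / 2) ^ k) * fderiv ℝ (M k) ξ v) < 0 := fun k hk =>
    mul_neg_of_pos_of_neg (ha k) (mul_neg_of_pos_of_neg (deriv_smoothRamp_pos hk) (hneg k hk))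
  obtain ⟨k, hk⟩ := exists_threshold_lt_of_rampSeries_pos hξ
  refine hasSum_lt (fun j => ?_) (hterm k hk) (hasSum_fderiv_rampSeries hs hM ξ v) hasSum_zero
  rcases le_or_gt (M j ξ - 3 * (1 / 2) ^ j) 0 with hj | hj
  · rw [deriv_smoothRamp_of_nonpos hj, zero_mul, mul_zero]
  · exact (hterm j hj).le

lemma exists_contDiff_strict_descent {E : Type*} [NormedAddCommGroup E] [NormedSpace ℝ E]
    [ProperSpace E] {V : E → ℝ} {D : E → Set E} (hV : ∀ ξ, 0 ≤ V ξ)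
    (happrox : ∀ c : ℝ, 0 < c → ∃ M : E → ℝ, ContDiff ℝ (⊤ : ℕ∞) M ∧
      (∀ ξ, |M ξ - max (V ξ) c| ≤ c) ∧ ∀ ξ, ∀ v ∈ D ξ, 2 * c ≤ V ξ → fderiv ℝ M ξ v < 0) :
    ∃ P : E → ℝ, ContDiff ℝ (⊤ : ℕ∞) P ∧ (∀ ξ, 0 ≤ P ξ) ∧ (∀ ξ, P ξ ≤ V ξ) ∧
      (∃ α, IsClassKInfty α ∧ ∀ ξ s, 0 ≤ s → s / 2 ≤ V ξ → α s ≤ P ξ) ∧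
      ∀ ξ, ∀ v ∈ D ξ, 0 < P ξ → fderiv ℝ P ξ v < 0 := by
  choose M hM hclose hdescent using fun k : ℕ => happrox ((1 / 2) ^ k) (by positivity)
  have hramp : ∀ k, ContDiff ℝ (⊤ : ℕ∞) fun ξ => smoothRamp (M k ξ - 3 * (1 / 2) ^ k) := fun k =>
    contDiff_smoothRamp.comp ((hM k).sub contDiff_const)
  obtain ⟨d, hd, hsummable⟩ := exists_pos_hasLocallySummableDerivs hramp
  let a : ℕ → ℝ := fun k => min (d k) (1 / 2 / 2 ^ k)
  have ha : ∀ k, 0 < a k ∧ a k ≤ 1 / 2 / 2 ^ k := fun k =>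
    ⟨lt_min (hd k) (by positivity), min_le_right _ _⟩
  have hs := hsummable a fun k => ⟨(ha k).1.le, min_le_left _ _⟩
  obtain ⟨α, hα, hle⟩ := exists_isClassKInfty_le_tsum_smoothRamp ha
  refine ⟨rampSeries a M, hs.contDiff_tsum fun k => (hramp k).const_smul (a k),
    fun ξ => rampSeries_nonneg fun k => (ha k).1,
    fun ξ => rampSeries_le ha (hV ξ) fun k => hclose k ξ,
    ⟨α, hα, fun ξ s hs0 hsV => (hle s hs0).trans
      (tsum_smoothRamp_le_rampSeries ha (hV ξ) (fun k => hclose k ξ) hsV)⟩, fun ξ v hv hξ => ?_⟩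
  exact fderiv_rampSeries_neg (fun k => (ha k).1) hs hM hξ fun k hk =>
    hdescent k ξ v hv (two_mul_le_of_abs_sub_max_le (hclose k ξ) hk)

end RampSeries

/-! ### Decay rates -/

section DecayRate

variable {E F : Type*} [NormedAddCommGroup E] [NormedSpace ℝ E] [NormedAddCommGroup F]
  {f : E → F → E} {P : E → ℝ} {χ : ℝ → ℝ} {s s' r r' : ℝ}

/-- The rates at which `P` decreases along `f`, at states of norm at most `r` where `P` is at least
`s` and under inputs of gain at most `P`. The rate `1` is included to keep the set nonempty. -/
def decayRates (f : E → F → E) (P : E → ℝ) (χ : ℝ → ℝ) (s r : ℝ) : Set ℝ :=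
  insert 1 {d | ∃ ξ μ, ‖ξ‖ ≤ r ∧ s ≤ P ξ ∧ χ ‖μ‖ ≤ P ξ ∧ d = -fderiv ℝ P ξ (f ξ μ)}

lemma decayRates_subset (hs : s ≤ s') (hr : r' ≤ r) :
    decayRates f P χ s' r' ⊆ decayRates f P χ s r := by
  refine insert_subset_insert ?_
  rintro d ⟨ξ, μ, hξ, hPξ, hμ, rfl⟩
  exact ⟨ξ, μ, hξ.trans hr, hs.trans hPξ, hμ, rfl⟩

lemma nonneg_of_mem_decayRates (hP0 : ∀ ξ, 0 ≤ P ξ)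
    (hneg : ∀ ξ μ, 0 < P ξ → χ ‖μ‖ ≤ P ξ → fderiv ℝ P ξ (f ξ μ) < 0) {d : ℝ}
    (hd : d ∈ decayRates f P χ s r) : 0 ≤ d := by
  rcases hd with rfl | ⟨ξ, μ, -, -, hμ, rfl⟩
  · exact zero_le_one
  rcases (hP0 ξ).eq_or_lt with hzero | hpos
  · have hmin : IsLocalMin P ξ := Eventually.of_forall fun ζ => hzero ▸ hP0 ζ
    rw [hmin.fderiv_eq_zero, zero_apply, neg_zero]
  · exact neg_nonneg.2 (hneg ξ μ hpos hμ).le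

lemma sInf_decayRates_le_sInf (hP0 : ∀ ξ, 0 ≤ P ξ)
    (hneg : ∀ ξ μ, 0 < P ξ → χ ‖μ‖ ≤ P ξ → fderiv ℝ P ξ (f ξ μ) < 0) (hs : s ≤ s') (hr : r' ≤ r) :
    sInf (decayRates f P χ s r) ≤ sInf (decayRates f P χ s' r') :=
  csInf_le_csInf ⟨0, fun _ => nonneg_of_mem_decayRates hP0 hneg⟩ (insert_nonempty _ _)
    (decayRates_subset hs hr)

variable [ProperSpace E] [ProperSpace F]

lemma sInf_decayRates_pos (hf : Continuous (Function.uncurry f)) (hP : ContDiff ℝ 1 P)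
    (hχ : IsClassK χ) (hχid : ∀ s, 0 ≤ s → s ≤ χ s)
    (hneg : ∀ ξ μ, 0 < P ξ → χ ‖μ‖ ≤ P ξ → fderiv ℝ P ξ (f ξ μ) < 0) (hs : 0 < s) :
    0 < sInf (decayRates f P χ s r) := by
  obtain ⟨W, hW⟩ := (isCompact_closedBall (0 : E) r).exists_bound_of_continuousOn
    hP.continuous.continuousOn
  let K : Set (E × F) := (Metric.closedBall 0 r ×ˢ Metric.closedBall 0 W) ∩
    ({q | s ≤ P q.1} ∩ {q | χ ‖q.2‖ ≤ P q.1})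
  have hgain : Continuous fun μ : F => χ ‖μ‖ :=
    hχ.1.comp_continuous continuous_norm fun μ => norm_nonneg μ
  have hK : IsCompact K :=
    ((isCompact_closedBall _ _).prod (isCompact_closedBall _ _)).inter_right
      ((isClosed_le continuous_const (hP.continuous.comp continuous_fst)).inter
        (isClosed_le (hgain.comp continuous_snd) (hP.continuous.comp continuous_fst)))
  have hrate : Continuous fun q : E × F => -fderiv ℝ P q.1 (f q.1 q.2) :=
    (((hP.continuous_fderiv one_ne_zero).comp continuous_fst).clm_apply hf).neg
  obtain ⟨d, hd, hle⟩ := hK.exists_forall_le' hrate.continuousOn (a := 0) fun q hq =>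
    neg_pos.2 (hneg q.1 q.2 (hs.trans_le hq.2.1) hq.2.2)
  refine (lt_min one_pos hd).trans_le (le_csInf (insert_nonempty _ _) ?_)
  rintro _ (rfl | ⟨ξ, μ, hξ, hPξ, hμ, rfl⟩)
  · exact min_le_left _ _
  · have hξr : ξ ∈ Metric.closedBall (0 : E) r := mem_closedBall_zero_iff.2 hξ
    have hμW : ‖μ‖ ≤ W :=
      (hχid _ (norm_nonneg μ)).trans (hμ.trans ((le_abs_self _).trans (hW ξ hξr)))
    exact (min_le_right _ _).trans
      (hle (ξ, μ) ⟨⟨hξr, mem_closedBall_zero_iff.2 hμW⟩, hPξ, hμ⟩)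

lemma exists_isClassK_antitoneOn_decay_rate (hf : Continuous (Function.uncurry f))
    (hP : ContDiff ℝ 1 P) (hP0 : ∀ ξ, 0 ≤ P ξ) (hχ : IsClassK χ) (hχid : ∀ s, 0 ≤ s → s ≤ χ s)
    (hneg : ∀ ξ μ, 0 < P ξ → χ ‖μ‖ ≤ P ξ → fderiv ℝ P ξ (f ξ μ) < 0) :
    ∃ α : ℝ → ℝ → ℝ, (∀ r, IsClassK fun s => α s r) ∧ (∀ s, 0 ≤ s → Antitone fun r => α s r) ∧
      ∀ ξ μ, χ ‖μ‖ ≤ P ξ → fderiv ℝ P ξ (f ξ μ) ≤ -α (P ξ) ‖ξ‖ := by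
  have hnonneg : ∀ {s r d}, d ∈ decayRates f P χ s r → 0 ≤ d :=
    nonneg_of_mem_decayRates hP0 hneg
  have hmono : ∀ r, Monotone fun s => sInf (decayRates f P χ s r) := fun r s s' hs =>
    sInf_decayRates_le_sInf hP0 hneg hs le_rfl
  refine ⟨fun s r => classKMinorant (fun s => sInf (decayRates f P χ s r)) s, fun r =>
    isClassK_classKMinorant (hmono r) fun s => sInf_decayRates_pos hf hP hχ hχid hneg,
    fun s hs r r' hr => ?_, fun ξ μ hμ => ?_⟩
  · exact classKMinorant_mono (hmono r') (hmono r)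
      (fun t => sInf_decayRates_le_sInf hP0 hneg le_rfl hr) hs
  · have hinf : sInf (decayRates f P χ (P ξ) ‖ξ‖) ≤ -fderiv ℝ P ξ (f ξ μ) :=
      csInf_le ⟨0, fun _ => hnonneg⟩ (mem_insert_of_mem _ ⟨ξ, μ, le_rfl, le_rfl, hμ, rfl⟩)
    have hminorant := classKMinorant_le (hmono ‖ξ‖)
      (Real.sInf_nonneg fun _ => hnonneg) (hP0 ξ)
    exact le_neg.1 (hminorant.trans hinf)

end DecayRate

/-! ### The converse Lyapunov theorem -/

lemma IsIOS.exists_isIOSLyapunov {n m p : ℕ}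
    {f : EuclideanSpace ℝ (Fin n) → EuclideanSpace ℝ (Fin m) → EuclideanSpace ℝ (Fin n)}
    {h : EuclideanSpace ℝ (Fin n) → EuclideanSpace ℝ (Fin p)}
    {x : ℝ → EuclideanSpace ℝ (Fin n) → (ℝ → EuclideanSpace ℝ (Fin m)) →
      EuclideanSpace ℝ (Fin n)}
    (hf : LocallyLipschitz (Function.uncurry f)) (hh : LocallyLipschitz h) (hB : IsBIBS f x)
    (hios : IsIOS h x) : ∃ V : EuclideanSpace ℝ (Fin n) → ℝ, IsIOSLyapunov f h V := by
  obtain ⟨β, γ, hβ, hγ, hest⟩ := hios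
  let g : ℝ → ℝ := fun s => γ s + s
  have hg : IsClassK g := hγ.add_id
  have hgid : ∀ s, 0 ≤ s → s ≤ g s := fun s hs => le_add_of_nonneg_left (hγ.nonneg hs)
  have hestg : IOSEstimate h x β g := fun ξ u hu hb t ht =>
    (hest ξ u hu hb t ht).trans
      (max_le_max le_rfl (le_add_of_nonneg_right (uNorm_nonneg u)))
  obtain ⟨P, hP, hP0, hPV, ⟨α, hα, hαP⟩, hneg⟩ := exists_contDiff_strict_descent
    (V := outputSup h x g) (D := fun ξ => f ξ '' {μ | 8 * g ‖μ‖ ≤ outputSup h x g ξ})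
    (fun ξ => outputSup_nonneg) fun c hc => by
      obtain ⟨M, hM, hclose, hdescent⟩ :=
        (decaysAbove_outputSup hf hB hg hβ hestg hc).exists_contDiff_approx hf hB hgid
          (locallyLipschitz_max_outputSup hf hh hB hgid hβ hestg hc) hc
      exact ⟨M, hM, hclose, fun ξ => forall_mem_image.2 fun μ hμ hξ => hdescent ξ μ hξ hμ⟩
  have hχ : IsClassK fun s => 8 * g s := hg.const_mul (by norm_num)
  obtain ⟨α₃, hα₃, hanti, hdecay⟩ := exists_isClassK_antitoneOn_decay_rate hf.continuous
    (hP.of_le (by exact_mod_cast le_top)) hP0 hχ (fun s hs => by linarith [hgid s hs])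
    fun ξ μ hξ hμ => hneg ξ _ (mem_image_of_mem _ (hμ.trans (hPV ξ))) hξ
  have hα₂ := ((hβ.1 0 self_mem_Ici).const_mul two_pos).isClassKInfty_add_id
  refine ⟨P, hP, hP0, ⟨α, _, hα, hα₂, fun ξ => ⟨hαP ξ _ (norm_nonneg _) ?_, ?_⟩⟩,
    _, hχ, α₃, fun r _ => hα₃ r, fun s hs => (hanti s hs).antitoneOn _, hdecay⟩
  · exact norm_output_div_two_le_outputSup hB.1 hg.2.2 hβ hestg
  · exact (hPV ξ).trans ((outputSup_le hβ hestg).trans (le_add_of_nonneg_right (norm_nonneg ξ)))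

/-! ### The direct Lyapunov theorem -/

section AbsolutelyContinuous

variable {v : ℝ → ℝ} {a b c d : ℝ}

lemma le_sub_mul_of_ae_deriv_le (hv : AbsolutelyContinuousOnInterval v a b) (hab : a ≤ b)
    (hd : ∀ᵐ t ∂(volume.restrict (Ioc a b)), deriv v t ≤ -d) : v b ≤ v a - d * (b - a) := by
  rw [restrict_Ioc_eq_restrict_Icc] at hd
  have hint := intervalIntegral.integral_mono_ae_restrict hab hv.intervalIntegrable_deriv
    (intervalIntegrable_const (c := -d)) hd
  rw [hv.integral_deriv_eq_sub, intervalIntegral.integral_const, smul_eq_mul] at hint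
  linarith

lemma le_max_sub_mul_of_ae_deriv_le (hv : AbsolutelyContinuousOnInterval v a b) (hab : a ≤ b)
    (hd0 : 0 ≤ d) (hd : ∀ᵐ t ∂(volume.restrict (Icc a b)), c ≤ v t → deriv v t ≤ -d) :
    v b ≤ max c (v a - d * (b - a)) := by
  by_cases hlow : ∃ t ∈ Icc a b, v t ≤ c
  · have hcompact : IsCompact (Icc a b ∩ v ⁻¹' Iic c) := isCompact_Icc.of_isClosed_subset
      ((uIcc_of_le hab ▸ hv.continuousOn).preimage_isClosed_of_isClosed isClosed_Icc isClosed_Iic)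
      inter_subset_left
    obtain ⟨τ, ⟨hτ, hvτ⟩, hlast⟩ := hcompact.exists_isGreatest hlow
    have hsub : Icc τ b ⊆ Icc a b := Icc_subset_Icc_left hτ.1
    refine le_max_of_le_left ((le_sub_mul_of_ae_deriv_le (d := d) (hv.mono ?_) hτ.2 ?_).trans ?_)
    · rwa [uIcc_of_le hτ.2, uIcc_of_le hab]
    · filter_upwards [ae_restrict_mem measurableSet_Ioc,
        ae_restrict_of_ae_restrict_of_subset (Ioc_subset_Icc_self.trans hsub) hd] with t ht hdt
      refine hdt (le_of_not_ge fun hvt => ht.1.not_ge (hlast ⟨hsub ⟨ht.1.le, ht.2⟩, hvt⟩))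
    · exact (sub_le_self _ (mul_nonneg hd0 (sub_nonneg.2 hτ.2))).trans hvτ
  · push Not at hlow
    refine le_max_of_le_right (le_sub_mul_of_ae_deriv_le hv hab ?_)
    filter_upwards [ae_restrict_mem measurableSet_Ioc,
      ae_restrict_of_ae_restrict_of_subset Ioc_subset_Icc_self hd] with t ht hdt
    exact hdt (hlow t (Ioc_subset_Icc_self ht)).le

end AbsolutelyContinuous

section Comparison

variable {E U : Type*} [NormedAddCommGroup E] [NormedSpace ℝ E] {f : E → U → E}
  {w : ℝ → U} {X : ℝ → E} {V : E → ℝ} {T B c d : ℝ}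

lemma IsTraj.ae_hasDerivAt_comp [CompleteSpace E] (hX : IsTraj f w T X)
    (hV : Differentiable ℝ V) : ∀ᵐ t ∂(volume.restrict (Icc 0 T)),
      HasDerivAt (fun t => V (X t)) (fderiv ℝ V (X t) (f (X t) (w t))) t := by
  rw [← restrict_Ioo_eq_restrict_Icc, ae_restrict_iff' measurableSet_Ioo]
  filter_upwards [hX.1.ae_hasDerivAt_integral] with t ht htT
  have hprimitive := (ht (Ioo_subset_Icc_self.trans Icc_subset_uIcc htT) 0 left_mem_uIcc).const_add
    (X 0)
  refine (hV (X t)).hasFDerivAt.comp_hasDerivAt t (hprimitive.congr_of_eventuallyEq ?_)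
  filter_upwards [Icc_mem_nhds htT.1 htT.2] with s hs using hX.2 s hs

variable [ProperSpace E]

lemma IsTraj.absolutelyContinuousOnInterval_comp (hX : IsTraj f w T X) (hT : 0 ≤ T)
    (hB : ∀ᵐ t ∂(volume.restrict (Icc 0 T)), ‖f (X t) (w t)‖ ≤ B) (hV : LocallyLipschitz V) :
    AbsolutelyContinuousOnInterval (fun t => V (X t)) 0 T := by
  obtain ⟨R, hR⟩ := isCompact_Icc.exists_bound_of_continuousOn (hX.continuousOn hT)
  obtain ⟨L, hL, hLip⟩ := exists_norm_sub_le_mul_of_locallyLipschitz hV R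
  refine LipschitzOnWith.absolutelyContinuousOnInterval (K := (L * B).toNNReal)
    (LipschitzOnWith.of_dist_le_mul fun s hs t ht => ?_)
  rw [uIcc_of_le hT] at hs ht
  calc ‖V (X s) - V (X t)‖ ≤ L * ‖X s - X t‖ := hLip _ _ (hR s hs) (hR t ht)
    _ ≤ L * (B * |s - t|) := mul_le_mul_of_nonneg_left (hX.norm_sub_le_mul hB ht hs) hL
    _ = L * B * |s - t| := (mul_assoc _ _ _).symm
    _ ≤ (L * B).toNNReal * |s - t| :=
      mul_le_mul_of_nonneg_right (Real.le_coe_toNNReal _) (abs_nonneg _)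

lemma IsTraj.comp_le_max (hX : IsTraj f w T X) (hT : 0 ≤ T)
    (hB : ∀ᵐ t ∂(volume.restrict (Icc 0 T)), ‖f (X t) (w t)‖ ≤ B) (hV : ContDiff ℝ 1 V)
    (hd0 : 0 ≤ d) (hd : ∀ᵐ t ∂(volume.restrict (Icc 0 T)),
      c ≤ V (X t) → fderiv ℝ V (X t) (f (X t) (w t)) ≤ -d) :
    V (X T) ≤ max c (V (X 0) - d * T) := by
  have hcomparison := le_max_sub_mul_of_ae_deriv_le
    (hX.absolutelyContinuousOnInterval_comp hT hB hV.locallyLipschitz) hT hd0 (c := c) <| by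
      filter_upwards [hX.ae_hasDerivAt_comp (hV.differentiable one_ne_zero), hd] with t ht hdt
      exact fun hc => ht.deriv.trans_le (hdt hc)
  rwa [sub_zero] at hcomparison

end Comparison

section Direct

variable {n m p : ℕ} {f : EuclideanSpace ℝ (Fin n) → EuclideanSpace ℝ (Fin m) →
    EuclideanSpace ℝ (Fin n)} {h : EuclideanSpace ℝ (Fin n) → EuclideanSpace ℝ (Fin p)}
  {x : ℝ → EuclideanSpace ℝ (Fin n) → (ℝ → EuclideanSpace ℝ (Fin m)) → EuclideanSpace ℝ (Fin n)}
  {V : EuclideanSpace ℝ (Fin n) → ℝ} {χ α₂ : ℝ → ℝ} {α₃ : ℝ → ℝ → ℝ}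
  {ξ : EuclideanSpace ℝ (Fin n)} {u : ℝ → EuclideanSpace ℝ (Fin m)} {R c t : ℝ}

lemma IsBIBS.lyapunov_le_max (hf : LocallyLipschitz (Function.uncurry f)) (hB : IsBIBS f x)
    (hV : ContDiff ℝ 1 V) (hχ : IsClassK χ) (hα₃ : ∀ r ∈ Ici (0 : ℝ), IsClassK fun s => α₃ s r)
    (hanti : ∀ s ∈ Ici (0 : ℝ), AntitoneOn (fun r => α₃ s r) (Ici 0))
    (hdec : ∀ ξ μ, χ ‖μ‖ ≤ V ξ → fderiv ℝ V ξ (f ξ μ) ≤ -α₃ (V ξ) ‖ξ‖)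
    (hu : IsInput u) (hb : BddInput u) (hR : ∀ s, 0 ≤ s → ‖x s ξ u‖ ≤ R) (hc : χ (uNorm u) ≤ c)
    (ht : 0 ≤ t) : V (x t ξ u) ≤ max c (V ξ - α₃ c R * t) := by
  have hR0 : 0 ≤ R := (norm_nonneg _).trans (hR 0 le_rfl)
  have hc0 : 0 ≤ c := (hχ.nonneg (uNorm_nonneg u)).trans hc
  obtain ⟨B, -, hfB⟩ := exists_norm_le_of_continuous_uncurry hf.continuous R (uNorm u)
  have hut := hb.ae_norm_le_Icc t
  have hspeed : ∀ᵐ s ∂(volume.restrict (Icc 0 t)), ‖f (x s ξ u) (u s)‖ ≤ B := by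
    filter_upwards [hut, ae_restrict_mem measurableSet_Icc] with s hus hs
    exact hfB _ _ (hR s hs.1) hus
  have hdescent : ∀ᵐ s ∂(volume.restrict (Icc 0 t)), c ≤ V (x s ξ u) →
      fderiv ℝ V (x s ξ u) (f (x s ξ u) (u s)) ≤ -α₃ c R := by
    filter_upwards [hut, ae_restrict_mem measurableSet_Icc] with s hus hs hcs
    have hgain : χ ‖u s‖ ≤ V (x s ξ u) :=
      (hχ.monotoneOn (norm_nonneg _) (uNorm_nonneg u) hus).trans (hc.trans hcs)
    refine (hdec _ _ hgain).trans (neg_le_neg ?_)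
    calc α₃ c R ≤ α₃ c ‖x s ξ u‖ := hanti c hc0 (norm_nonneg _) hR0 (hR s hs.1)
      _ ≤ α₃ (V (x s ξ u)) ‖x s ξ u‖ :=
        (hα₃ _ (norm_nonneg _)).monotoneOn hc0 (hc0.trans hcs) hcs
  simpa only [hB.1.initial hu] using
    (hB.isTraj hf hu hb ξ ht).comp_le_max ht hspeed hV ((hα₃ R hR0).nonneg hc0) hdescent

lemma IsBIBS.lyapunov_le_sub_mul (hf : LocallyLipschitz (Function.uncurry f)) (hB : IsBIBS f x)
    (hV : ContDiff ℝ 1 V) (hα₂ : IsClassK α₂) (hupper : ∀ ξ, V ξ ≤ α₂ ‖ξ‖) (hχ : IsClassK χ)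
    (hα₃ : ∀ r ∈ Ici (0 : ℝ), IsClassK fun s => α₃ s r)
    (hanti : ∀ s ∈ Ici (0 : ℝ), AntitoneOn (fun r => α₃ s r) (Ici 0))
    (hdec : ∀ ξ μ, χ ‖μ‖ ≤ V ξ → fderiv ℝ V ξ (f ξ μ) ≤ -α₃ (V ξ) ‖ξ‖)
    {σ : ℝ → ℝ} (hσ : IsClassK σ) (hstate : ∀ ξ u, IsInput u → BddInput u →
      ∀ t ∈ Ici (0 : ℝ), ‖x t ξ u‖ ≤ max (σ ‖ξ‖) (σ (uNorm u)))
    (hu : IsInput u) (hb : BddInput u) (ht : 0 ≤ t)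
    (hlarge : max (χ (uNorm u)) (α₂ (uNorm u)) < V (x t ξ u)) (hc : 0 ≤ c)
    (hcV : c < V (x t ξ u)) : V (x t ξ u) ≤ α₂ ‖ξ‖ - α₃ c (σ ‖ξ‖) * t := by
  have hdescent {R c'} (hR : ∀ s, 0 ≤ s → ‖x s ξ u‖ ≤ R) (hχc : χ (uNorm u) ≤ c')
      (hc' : c' < V (x t ξ u)) : V (x t ξ u) ≤ V ξ - α₃ c' R * t :=
    (le_max_iff.1 (hB.lyapunov_le_max hf hV hχ hα₃ hanti hdec hu hb hR hχc ht)).resolve_left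
      hc'.not_ge
  have hχu := (le_max_left _ _).trans_lt hlarge
  have hdecrease : V (x t ξ u) ≤ V ξ := (hdescent (hstate ξ u hu hb) le_rfl hχu).trans <|
    sub_le_self _ <| mul_nonneg ((hα₃ _ ((norm_nonneg _).trans
      (hstate ξ u hu hb 0 self_mem_Ici))).nonneg (hχ.nonneg (uNorm_nonneg u))) ht
  have hinput : uNorm u ≤ ‖ξ‖ := (hα₂.2.1.le_iff_le (uNorm_nonneg u) (norm_nonneg ξ)).1
    ((le_max_right _ _).trans (hlarge.le.trans (hdecrease.trans (hupper ξ))))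
  have hσξ : 0 ≤ σ ‖ξ‖ := hσ.nonneg (norm_nonneg ξ)
  have hR : ∀ s, 0 ≤ s → ‖x s ξ u‖ ≤ σ ‖ξ‖ := fun s hs => (hstate ξ u hu hb s hs).trans
    (max_le le_rfl (hσ.monotoneOn (uNorm_nonneg u) (norm_nonneg ξ) hinput))
  calc V (x t ξ u) ≤ V ξ - α₃ (max c (χ (uNorm u))) (σ ‖ξ‖) * t :=
        hdescent hR (le_max_right _ _) (max_lt hcV hχu)
    _ ≤ α₂ ‖ξ‖ - α₃ c (σ ‖ξ‖) * t := sub_le_sub (hupper ξ) (mul_le_mul_of_nonneg_right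
        ((hα₃ _ hσξ).monotoneOn hc (le_max_of_le_left hc) (le_max_left _ _)) ht)

lemma IsIOSLyapunov.isIOS (hf : LocallyLipschitz (Function.uncurry f)) (hB : IsBIBS f x)
    (hL : IsIOSLyapunov f h V) : IsIOS h x := by
  obtain ⟨hV, -, ⟨α₁, α₂, hα₁, hα₂, hbounds⟩, χ, hχ, α₃, hα₃, hanti, hdec⟩ := hL
  obtain ⟨σ, hσ, hstate⟩ := hB.2
  obtain ⟨κ, hκ, hκα₁⟩ := hα₁.exists_isClassK_inverse
  let g : ℝ → ℝ := fun s => max (χ s) (α₂ s)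
  have hg : IsClassK g := hχ.max hα₂.1
  let S : Set (EuclideanSpace ℝ (Fin n) × (ℝ → EuclideanSpace ℝ (Fin m)) × ℝ) :=
    {i | IsInput i.2.1 ∧ BddInput i.2.1 ∧ 0 ≤ i.2.2 ∧ g (uNorm i.2.1) < V (x i.2.2 i.1 i.2.1)}
  have hdecay : ∀ i ∈ S, ∀ c, 0 ≤ c → c < V (x i.2.2 i.1 i.2.1) →
      V (x i.2.2 i.1 i.2.1) ≤ α₂ ‖i.1‖ - α₃ c (σ ‖i.1‖) * i.2.2 := by
    rintro ⟨ξ, u, t⟩ ⟨hu, hb, ht, hlarge⟩ c hc hcV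
    exact hB.lyapunov_le_sub_mul hf (hV.of_le (by exact_mod_cast le_top)) hα₂.1
      (fun ξ => (hbounds ξ).2) hχ hα₃ hanti hdec hσ hstate hu hb ht hlarge hc hcV
  obtain ⟨β, hβ, hle⟩ := exists_isClassKL_of_decay (S := S) (size := fun i => ‖i.1‖)
    (time := fun i => i.2.2) (value := fun i => ‖h (x i.2.2 i.1 i.2.1)‖)
    (ρ := fun c s => α₃ c (σ s)) hα₁ hα₂.1 (fun s hs => hα₃ _ (hσ.nonneg hs))
    (fun c hc _ hs _ hr hsr =>
      hanti c hc (hσ.nonneg hs) (hσ.nonneg hr) (hσ.monotoneOn hs hr hsr))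
    (fun i _ => norm_nonneg _) (fun i hi => hi.2.2.1) (fun i _ => (hbounds _).1)
    (fun i _ => norm_nonneg _) hdecay
  refine ⟨β, fun s => κ (g s), hβ, hκ.comp hg, fun ξ u hu hb t ht => ?_⟩
  rcases lt_or_ge (g (uNorm u)) (V (x t ξ u)) with hlarge | hsmall
  · exact le_max_of_le_left (hle (ξ, u, t) ⟨hu, hb, ht, hlarge⟩)
  · have hα₁g := (hbounds (x t ξ u)).1.trans hsmall
    rw [← hκα₁ _ (norm_nonneg (h (x t ξ u)))]
    exact le_max_of_le_right (hκ.monotoneOn (hα₁.1.nonneg (norm_nonneg _))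
      (hg.nonneg (uNorm_nonneg u)) hα₁g)

end Direct

/-- A BIBS system is IOS if and only if it admits an IOS-Lyapunov function. -/
theorem ios_iff_exists_iosLyapunov {n m p : ℕ}
    (f : EuclideanSpace ℝ (Fin n) → EuclideanSpace ℝ (Fin m) → EuclideanSpace ℝ (Fin n))
    (h : EuclideanSpace ℝ (Fin n) → EuclideanSpace ℝ (Fin p))
    (x : ℝ → EuclideanSpace ℝ (Fin n) → (ℝ → EuclideanSpace ℝ (Fin m)) →
      EuclideanSpace ℝ (Fin n))
    (hf : LocallyLipschitz fun q : EuclideanSpace ℝ (Fin n) × EuclideanSpace ℝ (Fin m) =>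
      f q.1 q.2)
    (hf0 : f 0 0 = 0)
    (hh : LocallyLipschitz h) (hh0 : h 0 = 0)
    (hBIBS : IsBIBS f x) :
    IsIOS h x ↔ ∃ V : EuclideanSpace ℝ (Fin n) → ℝ, IsIOSLyapunov f h V :=
  ⟨fun hios => hios.exists_isIOSLyapunov hf hh hBIBS, fun ⟨_, hL⟩ => hL.isIOS hf hBIBS⟩
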